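/- arXiv:2301.07353 — 3 statements merged into one kernel-verified Lean document; each statement's English description precedes it below -/
import Mathlib

section
/- Let d ≥ 1 and let P = (p⁽¹⁾,…,p⁽ᵈ⁾) be a d-tuple of probability vectors of length m with p⁽ᵏ⁾ ≠ p⁽ˡ⁾ for all k ≠ ℓ. Let R = (r⁽¹⁾,…,r⁽ᵈ⁾) and Q = (q⁽¹⁾,…,q⁽ᵈ⁾) be d-tuples of nonzero vectors with nonnegative entries, the columns within each tuple sharing a common support, and suppose there exists a stochastic matrix S with S q⁽ᵏ⁾ = r⁽ᵏ⁾ for all k. Then there exist n ∈ ℕ and a stochastic matrix T such that T ( (p⁽ᵏ⁾)^{⊗n} ⊗ r⁽ᵏ⁾ ) = q⁽ᵏ⁾ for all k = 1,…,d. In particular, for every d-tuple Q of probability vectors all of whose entries are strictly positive, there exist n ∈ ℕ and a stochastic matrix T with T (p⁽ᵏ⁾)^{⊗n} = q⁽ᵏ⁾ for all k. -/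
open scoped BigOperators NNReal

noncomputable section

/-- A probability vector on a finite index type. -/
def IsProbVec {ι : Type*} [Fintype ι] (p : ι → ℝ) : Prop :=
  (∀ i, 0 ≤ p i) ∧ ∑ i, p i = 1

/-- A (column-)stochastic matrix: nonnegative entries, every column sums to `1`. -/
def IsStochastic {ι κ : Type*} [Fintype ι] [Fintype κ] (T : ι → κ → ℝ) : Prop :=
  (∀ i j, 0 ≤ T i j) ∧ ∀ j, ∑ i, T i j = 1

/-- Matrix–vector multiplication. -/
def matVec {ι κ : Type*} [Fintype κ] (T : ι → κ → ℝ) (v : κ → ℝ) : ι → ℝ :=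
  fun i => ∑ j, T i j * v j

/-- Kronecker product of two vectors. -/
def kron {ι κ : Type*} (p : ι → ℝ) (q : κ → ℝ) : ι × κ → ℝ :=
  fun x => p x.1 * q x.2

/-- `n`-fold Kronecker power of a vector. -/
def kpow {ι : Type*} (p : ι → ℝ) (n : ℕ) : (Fin n → ι) → ℝ :=
  fun f => ∏ j, p (f j)

/-- Kronecker product reindexed along `Fin (m * n)`. -/
def kronFin {m n : ℕ} (p : Fin m → ℝ) (q : Fin n → ℝ) : Fin (m * n) → ℝ :=
  fun i => kron p q (finProdFinEquiv.symm i)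

/-- The sum of the `k` largest entries of a nonnegative vector, expressed as the
largest sum over subsets of cardinality at most `k`. -/
def topSum {ι : Type*} [Fintype ι] (p : ι → ℝ) (k : ℕ) : ℝ :=
  ⨆ s ∈ {s : Finset ι | s.card ≤ k}, ∑ i ∈ s, p i

/-- Majorization for nonnegative vectors (possibly of different lengths):
equal total sums, and for each `k` the sum of the `k` largest entries of `p` is
at least that of `q`. -/
def Majorizes {ι κ : Type*} [Fintype ι] [Fintype κ] (p : ι → ℝ) (q : κ → ℝ) : Prop :=
  (∑ i, p i = ∑ j, q j) ∧ ∀ k : ℕ, topSum q k ≤ topSum p k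

/-- The size of the support, `‖p‖₀`. -/
def supp0 {ι : Type*} [Fintype ι] (p : ι → ℝ) : ℕ :=
  (Finset.univ.filter fun i => p i ≠ 0).card

/-- Entrywise nonnegativity. -/
def NonnegVec {n : ℕ} (p : Fin n → ℝ) : Prop := ∀ i, 0 ≤ p i

/-- The modified majorization preorder `≽₀,₁`: majorization plus equality of
support sizes. -/
def MajMod {ι κ : Type*} [Fintype ι] [Fintype κ] (p : ι → ℝ) (q : κ → ℝ) : Prop :=
  Majorizes p q ∧ supp0 p = supp0 q

/-- `f_α(p) = ∑_{i ∈ supp p} (p i)^α`. -/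
def fA {ι : Type*} [Fintype ι] (α : ℝ) (p : ι → ℝ) : ℝ :=
  ∑ i, if p i = 0 then 0 else p i ^ α

/-- Shannon entropy (the terms with `p i = 0` vanish). -/
def H1ent {ι : Type*} [Fintype ι] (p : ι → ℝ) : ℝ := -∑ i, p i * Real.log (p i)

/-- `H₀'(p) = ∑_{i ∈ supp p} log p_i`. -/
def H0' {ι : Type*} [Fintype ι] (p : ι → ℝ) : ℝ :=
  ∑ i, if p i = 0 then 0 else Real.log (p i)

/-- Rényi entropy of order `α` (with `α = 1` the Shannon entropy). -/
def Hent {ι : Type*} [Fintype ι] (α : ℝ) (p : ι → ℝ) : ℝ :=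
  if α = 1 then -∑ i, p i * Real.log (p i)
  else (1 / (1 - α)) * Real.log (∑ i, if p i = 0 then 0 else p i ^ α)

/-- Min-entropy `H_∞(p) = - log max_i p_i`. -/
def HentInf {ι : Type*} [Fintype ι] (p : ι → ℝ) : ℝ := -Real.log (⨆ i, p i)

/-- Kullback–Leibler divergence (the terms with `p i = 0` vanish). -/
def KL {n : ℕ} (p q : Fin n → ℝ) : ℝ :=
  ∑ i, p i * Real.log (p i / q i)

/-- Rényi divergence of order `α` for vectors with common support. -/
def Renyi {n : ℕ} (α : ℝ) (p q : Fin n → ℝ) : ℝ :=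
  if α = 1 then ∑ i, p i * Real.log (p i / q i)
  else (1 / (α - 1)) * Real.log (∑ i, if p i = 0 then 0 else p i ^ α * q i ^ (1 - α))

/-- Max-divergence `D_∞(p‖q) = max_{i ∈ supp q} log (p_i / q_i)`. -/
def RenyiInf {n : ℕ} (p q : Fin n → ℝ) : ℝ :=
  ⨆ i ∈ Finset.univ.filter (fun i => q i ≠ 0), Real.log (p i / q i)

/-- Rényi divergence with values in the extended reals `[0, ∞]`. -/
def RenyiE {n : ℕ} (α : ℝ) (p q : Fin n → ℝ) : EReal :=
  if α = 1 then
    (if ∀ i, p i ≠ 0 → q i ≠ 0 then ((∑ i, p i * Real.log (p i / q i) : ℝ) : EReal) else ⊤)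
  else if α < 1 then
    (if ∃ i, p i ≠ 0 ∧ q i ≠ 0 then
      (((1 / (α - 1)) *
        Real.log (∑ i, if p i = 0 ∨ q i = 0 then 0 else p i ^ α * q i ^ (1 - α)) : ℝ) : EReal)
    else (⊤ : EReal))
  else
    (if ∀ i, p i ≠ 0 → q i ≠ 0 then
      (((1 / (α - 1)) *
        Real.log (∑ i, if p i = 0 then 0 else p i ^ α * q i ^ (1 - α)) : ℝ) : EReal)
    else (⊤ : EReal))

/-- The common support of a tuple of vectors. -/
def suppIdx {d n : ℕ} (P : Fin d → Fin n → ℝ) : Finset (Fin n) :=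
  Finset.univ.filter fun i => ∃ k, P k i ≠ 0

/-- `f_α(P) = ∑_{i ∈ I} ∏_k (p_i^{(k)})^{α_k}` with `I` the common support. -/
def fMat {d n : ℕ} (α : Fin d → ℝ) (P : Fin d → Fin n → ℝ) : ℝ :=
  ∑ i ∈ suppIdx P, ∏ k, P k i ^ α k

/-- The matrix `α`-divergence `D_α`. -/
def Dmat {d n : ℕ} (α : Fin d → ℝ) (P : Fin d → Fin n → ℝ) : ℝ :=
  (1 / ((⨆ k, α k) - 1)) * Real.log (∑ i ∈ suppIdx P, ∏ k, P k i ^ α k)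

/-- The tropical matrix divergence `D^𝕋_β`. -/
def DmatT {d n : ℕ} (β : Fin d → ℝ) (P : Fin d → Fin n → ℝ) : ℝ :=
  (1 / (⨆ k, β k)) * Real.log (⨆ i ∈ suppIdx P, ∏ k, P k i ^ β k)

/-- Membership in `A₊`: entries summing to `1`, all nonnegative. -/
def memAplus {d : ℕ} (α : Fin d → ℝ) : Prop := (∑ k, α k = 1) ∧ ∀ k, 0 ≤ α k

/-- Membership in `A₋`: entries summing to `1`, one entry `≥ 1`, the others `≤ 0`. -/
def memAminus {d : ℕ} (α : Fin d → ℝ) : Prop :=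
  (∑ k, α k = 1) ∧ ∃ k, 1 ≤ α k ∧ ∀ l, l ≠ k → α l ≤ 0

/-- Membership in `B₋`: entries summing to `0`, one entry `≥ 0`, the others `≤ 0`. -/
def memBminus {d : ℕ} (β : Fin d → ℝ) : Prop :=
  (∑ k, β k = 0) ∧ ∃ k, 0 ≤ β k ∧ ∀ l, l ≠ k → β l ≤ 0

/-- `α` is none of the standard basis vectors `e₁, …, e_d`. -/
def notBasis {d : ℕ} (α : Fin d → ℝ) : Prop := ∀ k, α ≠ Pi.single k 1

/-- ℓ¹-distance of two vectors, padding with zeros to a common length. -/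
def l1PadDist {m n : ℕ} (p : Fin m → ℝ) (q : Fin n → ℝ) : ℝ :=
  ∑ i : Fin (max m n),
    |(if h : (i : ℕ) < m then p ⟨(i : ℕ), h⟩ else 0) -
      (if h : (i : ℕ) < n then q ⟨(i : ℕ), h⟩ else 0)|

/-- Index type of the direct sum `⨁_{s=0}^{n-1} p^{⊗(n-1-s)} ⊗ q^{⊗s}`. -/
abbrev TrickIdx (m m' n : ℕ) : Type :=
  Σ s : Fin n, (Fin (n - 1 - (s : ℕ)) → Fin m) × (Fin (s : ℕ) → Fin m')

/-- The standard catalyst `(1/n) ⨁_{s=0}^{n-1} p^{⊗(n-1-s)} ⊗ q^{⊗s}`. -/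
def trick {m m' : ℕ} (p : Fin m → ℝ) (q : Fin m' → ℝ) (n : ℕ) : TrickIdx m m' n → ℝ :=
  fun x => (1 / (n : ℝ)) * (kpow p (n - 1 - (x.1 : ℕ)) x.2.1 * kpow q (x.1 : ℕ) x.2.2)

/-- A valid tuple: nonnegative entries and common support across the tuple. -/
def TupOK {d n : ℕ} (P : Fin d → Fin n → ℝ) : Prop :=
  (∀ k i, 0 ≤ P k i) ∧ ∀ k l i, P k i ≠ 0 ↔ P l i ≠ 0

/-- Matrix majorization of tuples: a single stochastic matrix carrying each column
of `P` to the corresponding column of `Q`. -/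
def TupMaj {d m n : ℕ} (P : Fin d → Fin m → ℝ) (Q : Fin d → Fin n → ℝ) : Prop :=
  ∃ T : Fin n → Fin m → ℝ, IsStochastic T ∧ ∀ k, matVec T (P k) = Q k

/-!
Among the `d` candidate sources `P k`, guess which one produced `n` independent samples by maximum
likelihood, and let `E n` be the confusion matrix of this guess. An off-diagonal entry of `E n` is
at most `(∑ i, √(P k i * P l i)) ^ n`, which tends to `0` because distinct probability vectors have
Bhattacharyya coefficient less than `1`; hence `E n → 1`. If `A` is the matrix with columns `Q k`,
then `A * (E n)⁻¹ → A` has columns summing to `1`, its zero rows are those of `A`, and its other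
rows are eventually positive. Guessing a source `l` and then drawing from the `l`-th column of
`A * (E n)⁻¹` maps `(P k)^{⊗n}` to `Q k`. The factor `R k` only contributes its total mass.
-/

section

open Filter Topology
open scoped Matrix

variable {ι α β γ : Type*}

/-- The Bhattacharyya coefficient of two nonnegative vectors, measuring their overlap. -/
def bhattacharyya [Fintype α] (p q : α → ℝ) : ℝ := ∑ i, √(p i * q i)

lemma bhattacharyya_nonneg [Fintype α] (p q : α → ℝ) : 0 ≤ bhattacharyya p q :=
  Finset.sum_nonneg fun _ _ => Real.sqrt_nonneg _

lemma bhattacharyya_lt_one [Fintype α] {p q : α → ℝ} (hp : IsProbVec p) (hq : IsProbVec q)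
    (hpq : p ≠ q) : bhattacharyya p q < 1 := by
  have gap (i : α) : (p i + q i) / 2 - √(p i * q i) = (√(p i) - √(q i)) ^ 2 / 2 := by
    rw [Real.sqrt_mul (hp.1 i), sub_sq, Real.sq_sqrt (hp.1 i), Real.sq_sqrt (hq.1 i)]
    ring
  obtain ⟨i, hi⟩ := Function.ne_iff.mp hpq
  calc bhattacharyya p q < ∑ i, (p i + q i) / 2 := by
        refine Finset.sum_lt_sum (fun j _ => ?_) ⟨i, Finset.mem_univ i, ?_⟩
        · rw [← sub_nonneg, gap]
          positivity
        · have hsqrt : √(p i) - √(q i) ≠ 0 :=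
            sub_ne_zero.mpr fun h => hi ((Real.sqrt_inj (hp.1 i) (hq.1 i)).mp h)
          rw [← sub_pos, gap]
          positivity
    _ = 1 := by
        rw [← Finset.sum_div, Finset.sum_add_distrib, hp.2, hq.2]
        norm_num

lemma bhattacharyya_kpow [Fintype α] {p q : α → ℝ} (hp : ∀ i, 0 ≤ p i) (hq : ∀ i, 0 ≤ q i)
    (n : ℕ) : bhattacharyya (kpow p n) (kpow q n) = bhattacharyya p q ^ n := by
  simp only [bhattacharyya, kpow, Fintype.sum_pow, ← Finset.prod_mul_distrib]
  exact Finset.sum_congr rfl fun x _ =>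
    Real.sqrt_prod _ fun j _ => mul_nonneg (hp (x j)) (hq (x j))

lemma IsProbVec.kpow [Fintype α] {p : α → ℝ} (hp : IsProbVec p) (n : ℕ) :
    IsProbVec (kpow p n) :=
  ⟨fun _ => Finset.prod_nonneg fun _ _ => hp.1 _, by
    simp only [_root_.kpow, ← Fintype.sum_pow, hp.2, one_pow]⟩

lemma isProbVec_inv_sum_smul [Fintype β] {v : β → ℝ} (hv : ∀ j, 0 ≤ v j) (hsum : ∑ j, v j ≠ 0) :
    IsProbVec ((∑ j, v j)⁻¹ • v) :=
  ⟨fun j => mul_nonneg (inv_nonneg.mpr (Finset.sum_nonneg fun j _ => hv j)) (hv j), by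
    simp only [Pi.smul_apply, smul_eq_mul, ← Finset.mul_sum, inv_mul_cancel₀ hsum]⟩

lemma IsStochastic.sum_matVec [Fintype α] [Fintype β] {T : β → α → ℝ} (hT : IsStochastic T)
    (v : α → ℝ) : ∑ j, matVec T v j = ∑ i, v i := by
  simp only [matVec]
  rw [Finset.sum_comm]
  simp only [← Finset.sum_mul, hT.2, one_mul]

lemma IsStochastic.comp_columns [Fintype α] [Fintype β] [Fintype γ] {T : β → α → ℝ}
    (hT : IsStochastic T) (f : γ → α) : IsStochastic fun j x => T j (f x) :=
  ⟨fun j x => hT.1 j (f x), fun x => hT.2 (f x)⟩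

lemma matVec_fst_kron [Fintype α] [Fintype γ] (T : β → α → ℝ) (p : α → ℝ) (r : γ → ℝ) :
    matVec (fun j (x : α × γ) => T j x.1) (kron p r) = (∑ i, r i) • matVec T p := by
  funext j
  simp only [matVec, kron, Pi.smul_apply, smul_eq_mul, Fintype.sum_prod_type, ← mul_assoc]
  rw [← Fintype.sum_mul_sum, mul_comm]

/-- The decision rule `c` guesses, at every outcome `x`, a source `k` for which the likelihood
`p k x` is maximal. -/
def IsMaxLikelihood (p : ι → α → ℝ) (c : α → ι) : Prop :=
  ∀ x k, p k x ≤ p (c x) x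

lemma exists_isMaxLikelihood [Finite ι] [Nonempty ι] (p : ι → α → ℝ) :
    ∃ c, IsMaxLikelihood p c := by
  choose c hc using fun x => Finite.exists_max fun k => p k x
  exact ⟨c, hc⟩

lemma one_vecMul_eq_one_iff {𝕜 : Type*} [NonAssocSemiring 𝕜] [Fintype β] {M : Matrix β ι 𝕜} :
    1 ᵥ* M = 1 ↔ ∀ k, ∑ j, M j k = 1 := by
  simp only [funext_iff, Matrix.vecMul, one_dotProduct, Pi.one_apply]

/-- The confusion matrix of the decision rule `c`: its entry at `(l, k)` is the mass that the source
`p k` gives to the outcomes at which `c` guesses `l`. -/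
def confusionMatrix [Fintype α] [DecidableEq ι] (p : ι → α → ℝ) (c : α → ι) : Matrix ι ι ℝ :=
  Matrix.of fun l k => ∑ x with c x = l, p k x

section confusionMatrix

variable [Fintype α] [DecidableEq ι] {p : ι → α → ℝ} {c : α → ι}

lemma confusionMatrix_nonneg (hp : ∀ k x, 0 ≤ p k x) (l k : ι) : 0 ≤ confusionMatrix p c l k :=
  Finset.sum_nonneg fun x _ => hp k x

lemma one_vecMul_confusionMatrix [Fintype ι] (hp : ∀ k, ∑ x, p k x = 1) :
    1 ᵥ* confusionMatrix p c = 1 := by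
  simp only [one_vecMul_eq_one_iff, confusionMatrix, Matrix.of_apply, Finset.sum_fiberwise, hp,
    implies_true]

lemma IsMaxLikelihood.confusionMatrix_le_bhattacharyya (hc : IsMaxLikelihood p c)
    (hp : ∀ k x, 0 ≤ p k x) (l k : ι) :
    confusionMatrix p c l k ≤ bhattacharyya (p k) (p l) := by
  calc ∑ x with c x = l, p k x ≤ ∑ x with c x = l, √(p k x * p l x) := by
        refine Finset.sum_le_sum fun x hx => Real.le_sqrt_of_sq_le ?_
        obtain rfl : c x = l := (Finset.mem_filter.mp hx).2
        rw [sq]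
        exact mul_le_mul_of_nonneg_left (hc x k) (hp k x)
    _ ≤ bhattacharyya (p k) (p l) :=
        Finset.sum_le_univ_sum_of_nonneg fun _ => Real.sqrt_nonneg _

lemma matVec_comp_columns_eq_mul_confusionMatrix [Fintype ι] (M : Matrix β ι ℝ) (k : ι) :
    matVec (fun j x => M j (c x)) (p k) = fun j => (M * confusionMatrix p c) j k := by
  funext j
  simp only [Matrix.mul_apply, confusionMatrix, Matrix.of_apply, Finset.mul_sum,
    matVec]
  rw [← Finset.sum_fiberwise _ c]
  refine Finset.sum_congr rfl fun l _ => Finset.sum_congr rfl fun x hx => ?_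
  rw [(Finset.mem_filter.mp hx).2]

end confusionMatrix

lemma tendsto_one_of_offDiag_tendsto_zero {𝕜 : Type*} [Ring 𝕜] [TopologicalSpace 𝕜]
    [IsTopologicalRing 𝕜] [Fintype ι] [DecidableEq ι] {L : Filter α} {E : α → Matrix ι ι 𝕜}
    (hsum : ∀ a, 1 ᵥ* E a = 1)
    (hoff : ∀ l k, l ≠ k → Tendsto (fun a => E a l k) L (𝓝 0)) : Tendsto E L (𝓝 1) := by
  refine tendsto_pi_nhds.mpr fun l => tendsto_pi_nhds.mpr fun k => ?_
  rcases eq_or_ne l k with rfl | hlk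
  · have hdiag (a : α) : 1 - ∑ k ∈ Finset.univ.erase l, E a k l = E a l l := by
      rw [← one_vecMul_eq_one_iff.mp (hsum a) l, ← Finset.add_sum_erase _ _ (Finset.mem_univ l),
        add_sub_cancel_right]
    have hrest : Tendsto (fun a => ∑ k ∈ Finset.univ.erase l, E a k l) L (𝓝 0) := by
      simpa only [Finset.sum_const_zero] using
        tendsto_finsetSum _ fun k hk => hoff k l (Finset.ne_of_mem_erase hk)
    simpa only [hdiag, sub_zero, Matrix.one_apply_eq] using hrest.const_sub 1
  · simpa only [Matrix.one_apply_ne hlk] using hoff l k hlk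

lemma tendsto_confusionMatrix_kpow [Finite ι] [DecidableEq ι] [Fintype α] {P : ι → α → ℝ}
    (hP : ∀ k, IsProbVec (P k)) (hinj : Function.Injective P) {c : ∀ n, (Fin n → α) → ι}
    (hc : ∀ n, IsMaxLikelihood (fun k => kpow (P k) n) (c n)) :
    Tendsto (fun n => confusionMatrix (fun k => kpow (P k) n) (c n)) atTop (𝓝 1) := by
  cases nonempty_fintype ι
  have hnonneg (n : ℕ) (k : ι) (x : Fin n → α) : 0 ≤ kpow (P k) n x := ((hP k).kpow n).1 x
  refine tendsto_one_of_offDiag_tendsto_zero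
    (fun n => one_vecMul_confusionMatrix fun k => ((hP k).kpow n).2) fun l k hlk => ?_
  refine squeeze_zero (fun n => confusionMatrix_nonneg (hnonneg n) l k)
    (fun n => (hc n).confusionMatrix_le_bhattacharyya (hnonneg n) l k) ?_
  simp only [bhattacharyya_kpow (hP k).1 (hP l).1]
  exact tendsto_pow_atTop_nhds_zero_of_lt_one (bhattacharyya_nonneg _ _)
    (bhattacharyya_lt_one (hP k) (hP l) (hinj.ne hlk.symm))

lemma one_vecMul_inv {𝕜 : Type*} [CommRing 𝕜] [Fintype ι] [DecidableEq ι] {E : Matrix ι ι 𝕜}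
    (hE : IsUnit E.det) (hsum : 1 ᵥ* E = 1) : 1 ᵥ* E⁻¹ = 1 := by
  calc 1 ᵥ* E⁻¹ = (1 ᵥ* E) ᵥ* E⁻¹ := by rw [hsum]
    _ = 1 := by rw [Matrix.vecMul_vecMul, Matrix.mul_nonsing_inv E hE, Matrix.vecMul_one]

lemma eventually_isUnit_det_nhds_one {𝕜 : Type*} [Field 𝕜] [TopologicalSpace 𝕜]
    [IsTopologicalRing 𝕜] [T1Space 𝕜] [Fintype ι] [DecidableEq ι] :
    ∀ᶠ E in 𝓝 (1 : Matrix ι ι 𝕜), IsUnit E.det := by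
  have hdet : ContinuousAt Matrix.det (1 : Matrix ι ι 𝕜) := continuous_id.matrix_det.continuousAt
  refine (hdet.eventually_ne ?_).mono fun _ => Ne.isUnit
  rw [Matrix.det_one]
  exact one_ne_zero

lemma eventually_mul_inv_nonneg [Fintype ι] [DecidableEq ι] [Finite β] {Q : ι → β → ℝ}
    (hQ : ∀ k j, 0 ≤ Q k j) (hsupp : ∀ k l, Function.support (Q k) = Function.support (Q l)) :
    ∀ᶠ E in 𝓝 (1 : Matrix ι ι ℝ), ∀ j l, 0 ≤ ((Matrix.of Q)ᵀ * E⁻¹) j l := by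
  have hcont : ContinuousAt (fun E : Matrix ι ι ℝ => (Matrix.of Q)ᵀ * E⁻¹) 1 := by
    refine (Continuous.matrix_mul continuous_const continuous_id).continuousAt.comp
      (continuousAt_matrix_inv 1 ?_)
    rw [Ring.inverse_eq_inv', Matrix.det_one]
    exact continuousAt_inv₀ one_ne_zero
  refine eventually_all.mpr fun j => eventually_all.mpr fun l => ?_
  by_cases hj : Q l j = 0
  · have hrow (k : ι) : Q k j = 0 := by
      rwa [← Function.notMem_support, hsupp k l, Function.notMem_support]
    exact .of_forall fun E => by
      simp only [Matrix.mul_apply, Matrix.transpose_apply, Matrix.of_apply, hrow, zero_mul,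
        Finset.sum_const_zero, le_refl]
  · have hentry := tendsto_pi_nhds.mp (tendsto_pi_nhds.mp hcont.tendsto j) l
    rw [inv_one, Matrix.mul_one] at hentry
    exact (hentry.eventually_const_lt ((hQ l j).lt_of_ne' hj)).mono fun _ => le_of_lt

lemma eventually_isStochastic_mul_inv [Fintype ι] [DecidableEq ι] [Fintype β] {Q : ι → β → ℝ}
    (hQ : ∀ k, IsProbVec (Q k))
    (hsupp : ∀ k l, Function.support (Q k) = Function.support (Q l)) :
    ∀ᶠ E in 𝓝 (1 : Matrix ι ι ℝ), 1 ᵥ* E = 1 →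
      IsStochastic fun j l => ((Matrix.of Q)ᵀ * E⁻¹) j l := by
  filter_upwards [eventually_isUnit_det_nhds_one,
    eventually_mul_inv_nonneg (fun k => (hQ k).1) hsupp] with E hunit hnonneg hsum
  have hQsum : 1 ᵥ* (Matrix.of Q)ᵀ = 1 := one_vecMul_eq_one_iff.mpr fun k => (hQ k).2
  have hcol : 1 ᵥ* ((Matrix.of Q)ᵀ * E⁻¹) = 1 := by
    rw [← Matrix.vecMul_vecMul, hQsum, one_vecMul_inv hunit hsum]
  exact ⟨hnonneg, one_vecMul_eq_one_iff.mp hcol⟩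

theorem eventually_exists_isStochastic_matVec_kpow_eq [Finite ι] [Nonempty ι] [Fintype α]
    [Fintype β] {P : ι → α → ℝ} (hP : ∀ k, IsProbVec (P k)) (hinj : Function.Injective P)
    {Q : ι → β → ℝ} (hQ : ∀ k, IsProbVec (Q k))
    (hsupp : ∀ k l, Function.support (Q k) = Function.support (Q l)) :
    ∀ᶠ n in atTop, ∃ T : β → (Fin n → α) → ℝ,
      IsStochastic T ∧ ∀ k, matVec T (kpow (P k) n) = Q k := by
  classical
  cases nonempty_fintype ι
  choose c hc using fun n => exists_isMaxLikelihood fun k => kpow (P k) n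
  have hlim := tendsto_confusionMatrix_kpow hP hinj hc
  filter_upwards [hlim.eventually eventually_isUnit_det_nhds_one,
    hlim.eventually (eventually_isStochastic_mul_inv hQ hsupp)] with n hunit hstoch
  have hM := hstoch (one_vecMul_confusionMatrix fun k => ((hP k).kpow n).2)
  have hcancel := Matrix.nonsing_inv_mul_cancel_right _ (Matrix.of Q)ᵀ hunit
  exact ⟨_, hM.comp_columns (c n), fun k =>
    (matVec_comp_columns_eq_mul_confusionMatrix (p := fun k => kpow (P k) n) _ k).trans
      (congrArg (fun M j => M j k) hcancel)⟩

theorem matrix_power_universal_general [Finite ι] [Nonempty ι] [Fintype α] {P : ι → α → ℝ}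
    (hP : ∀ k, IsProbVec (P k)) (hinj : Function.Injective P) :
    (∀ {β γ : Type*} [Fintype β] [Fintype γ] {R : ι → γ → ℝ} {Q : ι → β → ℝ},
      (∀ k j, 0 ≤ Q k j) → (∀ k, Q k ≠ 0) →
      (∀ k l, Function.support (Q k) = Function.support (Q l)) →
      (∀ k, ∑ i, R k i = ∑ j, Q k j) →
      ∀ᶠ n in atTop, ∃ T : β → (Fin n → α) × γ → ℝ,
        IsStochastic T ∧ ∀ k, matVec T (kron (kpow (P k) n) (R k)) = Q k) ∧
    (∀ {β : Type*} [Fintype β] {Q : ι → β → ℝ},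
      (∀ k, IsProbVec (Q k)) → (∀ k l, Function.support (Q k) = Function.support (Q l)) →
      ∀ᶠ n in atTop, ∃ T : β → (Fin n → α) → ℝ,
        IsStochastic T ∧ ∀ k, matVec T (kpow (P k) n) = Q k) := by
  refine ⟨fun {β γ} _ _ R Q hQ hQ0 hsupp hR => ?_,
    eventually_exists_isStochastic_matVec_kpow_eq hP hinj⟩
  have hsum (k : ι) : ∑ j, Q k j ≠ 0 :=
    (Fintype.sum_pos ((show 0 ≤ Q k from hQ k).lt_of_ne' (hQ0 k))).ne'
  have hnormalized := eventually_exists_isStochastic_matVec_kpow_eq hP hinj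
    (fun k => isProbVec_inv_sum_smul (hQ k) (hsum k)) fun k l => by
      simpa only [Function.support_const_smul_of_ne_zero _ _ (inv_ne_zero (hsum _))]
        using hsupp k l
  filter_upwards [hnormalized] with n ⟨T, hT, hTP⟩
  refine ⟨_, hT.comp_columns Prod.fst, fun k => ?_⟩
  rw [matVec_fst_kron, hTP, hR, smul_inv_smul₀ (hsum k)]

end

/-- **Power universality in the matrix majorization semiring.**  If the columns
of the stochastic tuple `P` are pairwise distinct, then whenever a tuple `R` is
matrix-majorized by a tuple `Q` (both consisting of nonzero nonnegative vectors
with common support within each tuple), some Kronecker power of `P` tensored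
with `R` matrix-majorizes `Q`.  In particular, every tuple of strictly positive
probability vectors is matrix-majorized by some Kronecker power of `P`. -/
theorem matrix_power_universal
    {d m : ℕ} (hd : 1 ≤ d)
    (P : Fin d → Fin m → ℝ) (hP : ∀ k, IsProbVec (P k))
    (hPdist : ∀ k l, k ≠ l → P k ≠ P l) :
    (∀ (a b : ℕ) (R : Fin d → Fin a → ℝ) (Q : Fin d → Fin b → ℝ),
      (∀ k i, 0 ≤ R k i) → (∀ k, R k ≠ 0) →
      (∀ k l i, R k i ≠ 0 ↔ R l i ≠ 0) →
      (∀ k j, 0 ≤ Q k j) → (∀ k, Q k ≠ 0) →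
      (∀ k l j, Q k j ≠ 0 ↔ Q l j ≠ 0) →
      (∃ S : Fin a → Fin b → ℝ, IsStochastic S ∧ ∀ k, matVec S (Q k) = R k) →
      ∃ (n : ℕ) (T : Fin b → ((Fin n → Fin m) × Fin a) → ℝ),
        IsStochastic T ∧
        ∀ k, matVec T (kron (kpow (P k) n) (R k)) = Q k) ∧
    (∀ (b : ℕ) (Q : Fin d → Fin b → ℝ),
      (∀ k, IsProbVec (Q k)) → (∀ k j, 0 < Q k j) →
      ∃ (n : ℕ) (T : Fin b → (Fin n → Fin m) → ℝ),
        IsStochastic T ∧ ∀ k, matVec T (kpow (P k) n) = Q k) := by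
  have : Nonempty (Fin d) := ⟨⟨0, hd⟩⟩
  obtain ⟨hkron, hkpow⟩ := matrix_power_universal_general hP fun k l => not_imp_not.mp (hPdist k l)
  refine ⟨fun a b R Q _ _ _ hQ hQ0 hQs ⟨S, hS, hSQ⟩ => ?_, fun b Q hQ hpos => ?_⟩
  · have hsum (k : Fin d) : ∑ i, R k i = ∑ j, Q k j := by rw [← hSQ k, hS.sum_matVec]
    exact (hkron hQ hQ0 (fun k l => Set.ext (hQs k l)) hsum).exists
  · have hsupp (k l : Fin d) : Function.support (Q k) = Function.support (Q l) :=
      Set.ext fun j => iff_of_true (hpos k j).ne' (hpos l j).ne'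
    exact (hkpow hQ hsupp).exists
end
end

section
/- Let d ≥ 1 and let Φ assign to every d-tuple P = (p⁽¹⁾,…,p⁽ᵈ⁾) of finite vectors with nonnegative entries of a common length, whose columns share a common support, a value Φ(P) ∈ ℝ≥0, invariantly under simultaneous permutation of the rows and under appending all-zero rows, such that Φ(P ⊞ Q) = Φ(P) + Φ(Q) and Φ(P ⊠ Q) = Φ(P)·Φ(Q) for all P, Q, Φ of the single-row all-ones tuple (1,…,1) is 1, and Φ of the single-row all-zeros tuple is 0. Say P majorizes Q if there is a stochastic matrix T with T p⁽ᵏ⁾ = q⁽ᵏ⁾ for all k. (i) If Φ is such that P majorizes Q implies Φ(P) ≥ Φ(Q), then there exists α ∈ A₋ with Φ = f_α, where f_α(P) = Σ_{i∈I} Π_{k=1}^d (p_i⁽ᵏ⁾)^{α_k} and I is the common support; conversely each f_α with α ∈ A₋ has all of these properties. (ii) If Φ is such that P majorizes Q implies Φ(P) ≤ Φ(Q), then there exists α ∈ A₊ with Φ = f_α; conversely each f_α with α ∈ A₊ has all of these properties. -/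
open scoped BigOperators NNReal

noncomputable section

/-- The basic properties of a normalized additive and multiplicative
functional on tuples (of a fixed length `d`) of finite nonnegative vectors
with common support: nonnegative values, invariance under simultaneous row
permutations and under appending an all-zero row, additivity under `⊞`,
multiplicativity under `⊠`, and normalization on the single-row all-ones and
all-zeros tuples. -/
def MPhiBase {d : ℕ} (Φ : ∀ n : ℕ, (Fin d → Fin n → ℝ) → ℝ) : Prop :=
  (∀ (n : ℕ) (P : Fin d → Fin n → ℝ), TupOK P → 0 ≤ Φ n P) ∧
  (∀ (n : ℕ) (σ : Equiv.Perm (Fin n)) (P : Fin d → Fin n → ℝ), TupOK P →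
    Φ n (fun k => P k ∘ σ) = Φ n P) ∧
  (∀ (n : ℕ) (P : Fin d → Fin n → ℝ), TupOK P →
    Φ (n + 1) (fun k => Fin.snoc (P k) 0) = Φ n P) ∧
  (∀ (m n : ℕ) (P : Fin d → Fin m → ℝ) (Q : Fin d → Fin n → ℝ),
    TupOK P → TupOK Q →
    Φ (m + n) (fun k => Fin.append (P k) (Q k)) = Φ m P + Φ n Q) ∧
  (∀ (m n : ℕ) (P : Fin d → Fin m → ℝ) (Q : Fin d → Fin n → ℝ),
    TupOK P → TupOK Q →
    Φ (m * n) (fun k => kronFin (P k) (Q k)) = Φ m P * Φ n Q) ∧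
  Φ 1 (fun _ _ => 1) = 1 ∧ Φ 1 (fun _ _ => 0) = 0

/-! On a single row a homomorphism `Φ` is a multiplicative function `φ`, and additivity makes `Φ`
the sum of `φ` over the rows. Merging two rows is a stochastic map, so `φ` is subadditive when `Φ`
is monotone and superadditive when `Φ` is antitone. On constant rows merging is reversible, so
`t ↦ φ (t, …, t)` is a semiring homomorphism and hence the identity. Therefore `φ` is positively
homogeneous, so convex or concave on the open orthant, so continuous, and a continuous
multiplicative function is a monomial `∏ x_k ^ α_k`. Comparing `2 φ(1, …, 1)` with `φ u + φ v` for
`u + v = (2, …, 2)` and suitable `u` forces `α ∈ A₋` or `α ∈ A₊`.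

Conversely, a positively homogeneous subadditive row function is monotone under stochastic maps, and
sub- or superadditivity of the monomial follows from the inequality between `∏ y_k ^ α_k` and
`∑ α_k y_k`, which is AM-GM for `α ∈ A₊` and its reverse for `α ∈ A₋`. -/

open Set Filter Topology

section Convexity

theorem sum_smul_le_map_sum_of_nonpos {𝕜 E β ι : Type*} [Field 𝕜] [LinearOrder 𝕜]
    [IsStrictOrderedRing 𝕜] [AddCommGroup E] [AddCommGroup β] [PartialOrder β]
    [IsOrderedAddMonoid β] [Module 𝕜 E] [Module 𝕜 β] [IsStrictOrderedModule 𝕜 β]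
    {s : Set E} {f : E → β} {t : Finset ι} {w : ι → 𝕜} {p : ι → E} {k : ι}
    (hf : ConvexOn 𝕜 s f) (hk : k ∈ t) (hwk : 0 < w k) (hw : ∀ l ∈ t, l ≠ k → w l ≤ 0)
    (hsum : ∑ l ∈ t, w l = 1) (hp : ∀ l ∈ t, p l ∈ s) (hmem : ∑ l ∈ t, w l • p l ∈ s) :
    ∑ l ∈ t, w l • f (p l) ≤ f (∑ l ∈ t, w l • p l) := by
  classical
  set c := ∑ l ∈ t, w l • p l with hc
  have hsum' : w k + ∑ l ∈ t.erase k, w l = 1 := by rw [Finset.add_sum_erase t w hk, hsum]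
  -- Solve `c = ∑ l, w l • p l` for `p k`, which becomes a convex combination of `c` and the `p l`.
  have hpk : p k = (w k)⁻¹ • c + ∑ l ∈ t.erase k, (-((w k)⁻¹ * w l)) • p l := by
    rw [hc, ← Finset.add_sum_erase t _ hk, smul_add, inv_smul_smul₀ hwk.ne', Finset.smul_sum]
    simp only [neg_smul, mul_smul, Finset.sum_neg_distrib, add_neg_cancel_right]
  have hjensen : f (p k) ≤
      (w k)⁻¹ • f c + ∑ l ∈ t.erase k, (-((w k)⁻¹ * w l)) • f (p l) := by
    conv_lhs => rw [hpk]
    refine hf.map_add_sum_le (fun l hl => ?_) ?_ (fun l hl => hp l (Finset.mem_of_mem_erase hl))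
      (inv_nonneg.2 hwk.le) hmem
    · rw [neg_nonneg]
      exact mul_nonpos_of_nonneg_of_nonpos (inv_nonneg.2 hwk.le)
        (hw l (Finset.mem_of_mem_erase hl) (Finset.ne_of_mem_erase hl))
    · rw [Finset.sum_neg_distrib, ← Finset.mul_sum, eq_sub_of_add_eq' hsum']
      field_simp
      ring
  calc ∑ l ∈ t, w l • f (p l)
      = w k • f (p k) + ∑ l ∈ t.erase k, w l • f (p l) := (Finset.add_sum_erase t _ hk).symm
    _ ≤ w k • ((w k)⁻¹ • f c + ∑ l ∈ t.erase k, (-((w k)⁻¹ * w l)) • f (p l)) +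
          ∑ l ∈ t.erase k, w l • f (p l) := by gcongr
    _ = f c := by
      simp only [smul_add, smul_inv_smul₀ hwk.ne', neg_smul, mul_smul, Finset.sum_neg_distrib,
        ← Finset.smul_sum, smul_neg, neg_add_cancel_right]

/-- Subadditivity of `f` on `s`; superadditivity is expressed as subadditivity of `-f`. -/
def SubadditiveOn {E β : Type*} [Add E] [Add β] [LE β] (s : Set E) (f : E → β) : Prop :=
  ∀ ⦃x⦄, x ∈ s → ∀ ⦃y⦄, y ∈ s → f (x + y) ≤ f x + f y

theorem SubadditiveOn.mono {E β : Type*} [Add E] [Add β] [LE β] {s t : Set E} {f : E → β}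
    (hf : SubadditiveOn t f) (hst : s ⊆ t) : SubadditiveOn s f :=
  fun _ hx _ hy => hf (hst hx) (hst hy)

theorem SubadditiveOn.insert_zero {E β : Type*} [AddZeroClass E] [AddZeroClass β] [Preorder β]
    {s : Set E} {f : E → β} (hf : SubadditiveOn s f) (h0 : f 0 = 0) :
    SubadditiveOn (insert 0 s) f := by
  rintro x (rfl | hx) y (rfl | hy)
  · simp [h0]
  · simp [h0]
  · simp [h0]
  · exact hf hx hy

theorem SubadditiveOn.convexOn {E : Type*} [AddCommGroup E] [Module ℝ E] {C : ConvexCone ℝ E}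
    {f : E → ℝ} (hf : SubadditiveOn C f) (hsmul : ∀ c : ℝ, 0 < c → ∀ x ∈ C, f (c • x) = c * f x) :
    ConvexOn ℝ C f := by
  refine convexOn_iff_forall_pos.2 ⟨C.convex, fun x hx y hy a b ha hb _ => ?_⟩
  simpa only [hsmul a ha x hx, hsmul b hb y hy, smul_eq_mul] using
    hf (C.smul_mem ha hx) (C.smul_mem hb hy)

end Convexity

theorem nnreal_ringHom_apply (g : ℝ≥0 →+* ℝ) (t : ℝ≥0) : g t = t := by
  have hnonneg (c : ℝ≥0) : 0 ≤ g c := by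
    rw [← NNReal.mul_self_sqrt c, map_mul]
    exact mul_self_nonneg _
  have hmono : Monotone g := fun a b hab => by
    obtain ⟨c, rfl⟩ := exists_add_of_le hab
    rw [map_add]
    exact le_add_of_nonneg_right (hnonneg c)
  have hrat (q : ℚ≥0) : g q = q := map_nnratCast g q
  have hbtwn {x y : ℝ} (hx : 0 ≤ x) (h : x < y) : ∃ q : ℚ≥0, x < q ∧ q < y := by
    obtain ⟨q, hxq, hqy⟩ := exists_rat_btwn h
    lift q to ℚ≥0 using by exact_mod_cast hx.trans hxq.le
    exact ⟨q, by exact_mod_cast hxq, by exact_mod_cast hqy⟩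
  refine le_antisymm (le_of_not_gt fun h => ?_) (le_of_not_gt fun h => ?_)
  · obtain ⟨q, htq, hqg⟩ := hbtwn t.2 h
    exact (hmono (a := t) (b := q) (by exact_mod_cast htq.le)).not_gt (by rwa [hrat])
  · obtain ⟨q, hgq, hqt⟩ := hbtwn (hnonneg t) h
    exact (hmono (a := q) (b := t) (by exact_mod_cast hqt.le)).not_gt (by rwa [hrat])

section WeightedGeomMean

variable {ι : Type*}

/-- The open positive orthant, i.e. the nonzero rows of tuples with common support. -/
def posOrthant (ι : Type*) : ConvexCone ℝ (ι → ℝ) where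
  carrier := {x | ∀ k, 0 < x k}
  smul_mem' _ hc _ hx k := mul_pos hc (hx k)
  add_mem' _ hx _ hy k := add_pos (hx k) (hy k)

theorem mem_posOrthant {x : ι → ℝ} : x ∈ posOrthant ι ↔ ∀ k, 0 < x k := Iff.rfl

theorem nonneg_of_mem_posOrthant {x : ι → ℝ} (hx : x ∈ posOrthant ι) : 0 ≤ x :=
  fun k => (hx k).le

theorem one_mem_posOrthant : (1 : ι → ℝ) ∈ posOrthant ι := fun _ => one_pos

theorem mul_mem_posOrthant {x y : ι → ℝ} (hx : x ∈ posOrthant ι) (hy : y ∈ posOrthant ι) :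
    x * y ∈ posOrthant ι := fun k => mul_pos (hx k) (hy k)

theorem inv_mem_posOrthant {x : ι → ℝ} (hx : x ∈ posOrthant ι) : x⁻¹ ∈ posOrthant ι :=
  fun k => inv_pos.2 (hx k)

theorem mulSingle_mem_posOrthant [DecidableEq ι] (k : ι) {t : ℝ} (ht : 0 < t) :
    Pi.mulSingle k t ∈ posOrthant ι := fun l => by
  rcases eq_or_ne l k with rfl | hl
  · rwa [Pi.mulSingle_eq_same]
  · rw [Pi.mulSingle_eq_of_ne hl]
    exact one_pos

theorem isOpen_posOrthant [Finite ι] : IsOpen (posOrthant ι : Set (ι → ℝ)) := by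
  have : (posOrthant ι : Set (ι → ℝ)) = univ.pi fun _ => Ioi 0 := by ext; simp [mem_posOrthant]
  rw [this]
  exact isOpen_set_pi finite_univ fun _ _ => isOpen_Ioi

variable [Fintype ι] {α x y : ι → ℝ}

/-- The generalized weighted geometric mean `∏ x_k ^ α_k`, the value of `f_α` on a single row. The
weights may be negative, and usually sum to one; in that case the mean vanishes at `x = 0`. -/
def weightedGeomMean (α x : ι → ℝ) : ℝ := ∏ k, x k ^ α k

theorem weightedGeomMean_pos (hx : x ∈ posOrthant ι) : 0 < weightedGeomMean α x :=
  Finset.prod_pos fun k _ => Real.rpow_pos_of_pos (hx k) _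

theorem weightedGeomMean_nonneg (hx : 0 ≤ x) : 0 ≤ weightedGeomMean α x :=
  Finset.prod_nonneg fun k _ => Real.rpow_nonneg (hx k) _

theorem weightedGeomMean_mul (hx : 0 ≤ x) (hy : 0 ≤ y) :
    weightedGeomMean α (x * y) = weightedGeomMean α x * weightedGeomMean α y := by
  simp only [weightedGeomMean, Pi.mul_apply, ← Finset.prod_mul_distrib]
  exact Finset.prod_congr rfl fun k _ => Real.mul_rpow (hx k) (hy k)

theorem weightedGeomMean_mulSingle [DecidableEq ι] (α : ι → ℝ) (k : ι) (t : ℝ) :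
    weightedGeomMean α (Pi.mulSingle k t) = t ^ α k := by
  rw [weightedGeomMean, Finset.prod_eq_single k (fun l _ hl => by simp [hl]) (by simp),
    Pi.mulSingle_eq_same]

theorem weightedGeomMean_zero (hα : ∑ k, α k = 1) : weightedGeomMean α 0 = 0 := by
  obtain ⟨k, -, hk⟩ := Finset.exists_ne_zero_of_sum_ne_zero (hα ▸ one_ne_zero)
  exact Finset.prod_eq_zero (Finset.mem_univ k) (Real.zero_rpow hk)

theorem weightedGeomMean_const (hα : ∑ k, α k = 1) {t : ℝ} (ht : 0 ≤ t) :
    weightedGeomMean α (fun _ => t) = t := by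
  rcases ht.eq_or_lt with rfl | ht
  · exact weightedGeomMean_zero hα
  · rw [weightedGeomMean, ← Real.rpow_sum_of_pos ht, hα, Real.rpow_one]

theorem weightedGeomMean_smul (hα : ∑ k, α k = 1) {t : ℝ} (ht : 0 ≤ t) (hx : 0 ≤ x) :
    weightedGeomMean α (t • x) = t * weightedGeomMean α x := by
  rw [← weightedGeomMean_const hα ht, ← weightedGeomMean_mul (fun _ => ht) hx,
    weightedGeomMean_const hα ht]
  rfl

theorem weightedGeomMean_eq_exp (hx : x ∈ posOrthant ι) :
    weightedGeomMean α x = Real.exp (∑ k, α k * Real.log (x k)) := by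
  rw [Real.exp_sum]
  exact Finset.prod_congr rfl fun k _ => by rw [Real.rpow_def_of_pos (hx k), mul_comm]

theorem weightedGeomMean_add_weightedGeomMean (hx : x ∈ posOrthant ι) (hy : y ∈ posOrthant ι) :
    weightedGeomMean α x + weightedGeomMean α y = weightedGeomMean α (x + y) *
      (weightedGeomMean α (x * (x + y)⁻¹) + weightedGeomMean α (y * (x + y)⁻¹)) := by
  have hxy := (posOrthant _).add_mem hx hy
  have hcancel {z : ι → ℝ} (hz : z ∈ posOrthant ι) :
      weightedGeomMean α (x + y) * weightedGeomMean α (z * (x + y)⁻¹) = weightedGeomMean α z := by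
    rw [← weightedGeomMean_mul (nonneg_of_mem_posOrthant hxy) (nonneg_of_mem_posOrthant <|
      mul_mem_posOrthant hz (inv_mem_posOrthant hxy))]
    exact congrArg _ (funext fun k => mul_div_cancel₀ (z k) (hxy k).ne')
  rw [mul_add, hcancel hx, hcancel hy]

theorem exists_eqOn_weightedGeomMean {φ : (ι → ℝ) → ℝ} (hpos : ∀ x ∈ posOrthant ι, 0 < φ x)
    (hmul : ∀ x ∈ posOrthant ι, ∀ y ∈ posOrthant ι, φ (x * y) = φ x * φ y)
    (hcont : ContinuousOn φ (posOrthant ι)) :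
    ∃ α : ι → ℝ, EqOn φ (weightedGeomMean α) (posOrthant ι) := by
  classical
  let expVec (u : ι → ℝ) : ι → ℝ := fun k => Real.exp (u k)
  have hexp (u : ι → ℝ) : expVec u ∈ posOrthant ι := fun k => Real.exp_pos (u k)
  have hadd (u v : ι → ℝ) :
      Real.log (φ (expVec (u + v))) = Real.log (φ (expVec u)) + Real.log (φ (expVec v)) := by
    rw [← Real.log_mul (hpos _ (hexp u)).ne' (hpos _ (hexp v)).ne', ← hmul _ (hexp u) _ (hexp v)]
    exact congrArg (fun x => Real.log (φ x)) (funext fun k => Real.exp_add (u k) (v k))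
  have hlogcont : Continuous fun u => Real.log (φ (expVec u)) :=
    (hcont.comp_continuous (by fun_prop) hexp).log fun u => (hpos _ (hexp u)).ne'
  let L : (ι → ℝ) →L[ℝ] ℝ := (AddMonoidHom.mk' _ hadd).toRealLinearMap hlogcont
  refine ⟨fun k => L fun l => if k = l then 1 else 0, fun x hx => ?_⟩
  have hlog : Real.log (φ x) = L fun k => Real.log (x k) :=
    congrArg (fun x => Real.log (φ x)) (funext fun k => (Real.exp_log (hx k)).symm)
  rw [weightedGeomMean_eq_exp hx, ← Real.exp_log (hpos x hx), hlog]
  simpa only [smul_eq_mul, mul_comm, ContinuousLinearMap.coe_coe] using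
    congrArg Real.exp (L.toLinearMap.pi_apply_eq_sum_univ fun k => Real.log (x k))

end WeightedGeomMean

section Subadditivity

theorem sum_mul_add_sum_mul_eq_one {ι K : Type*} [Fintype ι] [Field K] {w x y : ι → K}
    (hw : ∑ k, w k = 1) (hxy : ∀ k, (x + y) k ≠ 0) :
    ∑ k, w k * (x * (x + y)⁻¹) k + ∑ k, w k * (y * (x + y)⁻¹) k = 1 := by
  rw [← Finset.sum_add_distrib, ← hw]
  refine Finset.sum_congr rfl fun k _ => ?_
  rw [← mul_add, ← Pi.add_apply, ← add_mul, Pi.mul_apply, Pi.inv_apply,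
    mul_inv_cancel₀ (hxy k), mul_one]

theorem two_le_rpow_mul_rpow_add_of_subadditiveOn {ι : Type*} [Fintype ι] {α : ι → ℝ}
    (hα : ∑ k, α k = 1) (h : SubadditiveOn (posOrthant ι) (weightedGeomMean α)) {k l : ι}
    (hkl : k ≠ l) {t : ℝ} (ht : 0 < t) (ht2 : t < 2) :
    2 ≤ t ^ α k * (2 - t) ^ α l + (2 - t) ^ α k * t ^ α l := by
  classical
  have hsum : Pi.mulSingle k t * Pi.mulSingle l (2 - t) +
      Pi.mulSingle k (2 - t) * Pi.mulSingle l t = fun _ : ι => (2 : ℝ) := by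
    ext i
    rcases eq_or_ne i k with rfl | hik
    · simp [hkl]
    · rcases eq_or_ne i l with rfl | hil
      · simp [hik]
      · simp [hik, hil, one_add_one_eq_two]
  have hmem (i : ι) : Pi.mulSingle i t ∈ posOrthant ι := mulSingle_mem_posOrthant i ht
  have hmem2 (i : ι) : Pi.mulSingle i (2 - t) ∈ posOrthant ι :=
    mulSingle_mem_posOrthant i (sub_pos.2 ht2)
  have hle := h (mul_mem_posOrthant (hmem k) (hmem2 l)) (mul_mem_posOrthant (hmem2 k) (hmem l))
  simpa only [hsum, weightedGeomMean_const hα two_pos.le, weightedGeomMean_mulSingle,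
    weightedGeomMean_mul (nonneg_of_mem_posOrthant (hmem _)) (nonneg_of_mem_posOrthant (hmem2 _)),
    weightedGeomMean_mul (nonneg_of_mem_posOrthant (hmem2 _)) (nonneg_of_mem_posOrthant (hmem _))]
    using hle

variable {d : ℕ} {α : Fin d → ℝ}

theorem weightedGeomMean_le_sum_of_memAplus {y : Fin d → ℝ} (hα : memAplus α) (hy : 0 ≤ y) :
    weightedGeomMean α y ≤ ∑ k, α k * y k :=
  Real.geom_mean_le_arith_mean_weighted _ _ _ (fun k _ => hα.2 k) hα.1 fun k _ => hy k

theorem sum_le_weightedGeomMean_of_memAminus {y : Fin d → ℝ} (hα : memAminus α)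
    (hy : y ∈ posOrthant (Fin d)) : ∑ k, α k * y k ≤ weightedGeomMean α y := by
  obtain ⟨hsum, k, hk, hneg⟩ := hα
  have := sum_smul_le_map_sum_of_nonpos convexOn_exp (p := fun k => Real.log (y k))
    (Finset.mem_univ k) (one_pos.trans_le hk) (fun l _ => hneg l) hsum (fun _ _ => mem_univ _)
    (mem_univ _)
  simpa only [smul_eq_mul, Real.exp_log (hy _), weightedGeomMean_eq_exp hy] using this

theorem subadditiveOn_weightedGeomMean_of_memAminus (hα : memAminus α) :
    SubadditiveOn (posOrthant (Fin d)) (weightedGeomMean α) := fun x hx y hy => by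
  have hxy := (posOrthant _).add_mem hx hy
  rw [weightedGeomMean_add_weightedGeomMean hx hy]
  refine le_mul_of_one_le_right (weightedGeomMean_pos hxy).le ?_
  rw [← sum_mul_add_sum_mul_eq_one hα.1 fun k => (hxy k).ne']
  exact add_le_add
    (sum_le_weightedGeomMean_of_memAminus hα (mul_mem_posOrthant hx (inv_mem_posOrthant hxy)))
    (sum_le_weightedGeomMean_of_memAminus hα (mul_mem_posOrthant hy (inv_mem_posOrthant hxy)))

theorem subadditiveOn_neg_weightedGeomMean_of_memAplus (hα : memAplus α) :
    SubadditiveOn (posOrthant (Fin d)) (-weightedGeomMean α) := fun x hx y hy => by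
  have hxy := (posOrthant _).add_mem hx hy
  simp only [Pi.neg_apply, ← neg_add, neg_le_neg_iff]
  rw [weightedGeomMean_add_weightedGeomMean hx hy]
  refine mul_le_of_le_one_right (weightedGeomMean_pos hxy).le ?_
  rw [← sum_mul_add_sum_mul_eq_one hα.1 fun k => (hxy k).ne']
  exact add_le_add
    (weightedGeomMean_le_sum_of_memAplus hα
      (nonneg_of_mem_posOrthant (mul_mem_posOrthant hx (inv_mem_posOrthant hxy))))
    (weightedGeomMean_le_sum_of_memAplus hα
      (nonneg_of_mem_posOrthant (mul_mem_posOrthant hy (inv_mem_posOrthant hxy))))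

theorem memAplus_of_subadditiveOn_neg (hα : ∑ k, α k = 1)
    (h : SubadditiveOn (posOrthant (Fin d)) (-weightedGeomMean α)) : memAplus α := by
  refine ⟨hα, fun k => le_of_not_gt fun hk => ?_⟩
  set s : ℝ := 2 ^ (α k)⁻¹
  have hs : 0 < s := Real.rpow_pos_of_pos two_pos _
  have hs1 : s < 1 := Real.rpow_lt_one_of_one_lt_of_neg one_lt_two (inv_lt_zero.2 hk)
  have hs2 : 0 < 2 - s := by linarith
  have hsα : s ^ α k = 2 := Real.rpow_inv_rpow two_pos.le hk.ne
  have hsum : Pi.mulSingle k s + Pi.mulSingle k (2 - s) = fun _ : Fin d => (2 : ℝ) := by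
    ext l
    rcases eq_or_ne l k with rfl | hl
    · simp
    · simp [hl, one_add_one_eq_two]
  have hle := h (mulSingle_mem_posOrthant k hs) (mulSingle_mem_posOrthant k hs2)
  simp only [hsum, Pi.neg_apply, weightedGeomMean_const hα two_pos.le, weightedGeomMean_mulSingle,
    hsα] at hle
  linarith [Real.rpow_pos_of_pos hs2 (α k)]

theorem memAminus_of_subadditiveOn (hα : ∑ k, α k = 1)
    (h : SubadditiveOn (posOrthant (Fin d)) (weightedGeomMean α)) : memAminus α := by
  obtain ⟨k, -, hk⟩ : ∃ k ∈ Finset.univ, 0 < α k :=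
    Finset.exists_lt_of_sum_lt (by simp [hα])
  have hneg (l : Fin d) (hlk : l ≠ k) : α l ≤ 0 := by
    refine le_of_not_gt fun hl => ?_
    have hcont : Continuous fun t : ℝ => t ^ α k * (2 - t) ^ α l + (2 - t) ^ α k * t ^ α l := by
      have hpow {a : ℝ} (ha : 0 < a) := Real.continuous_rpow_const ha.le
      have hpow2 {a : ℝ} (ha : 0 < a) := (hpow ha).comp (continuous_sub_left 2)
      exact ((hpow hk).mul (hpow2 hl)).add ((hpow2 hk).mul (hpow hl))
    have hlim := ge_of_tendsto ((hcont.tendsto 0).mono_left (nhdsWithin_le_nhds (s := Ioi 0))) <|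
      mem_of_superset (Ioo_mem_nhdsGT two_pos) fun t ht =>
        two_le_rpow_mul_rpow_add_of_subadditiveOn hα h hlk.symm ht.1 ht.2
    norm_num [Real.zero_rpow hk.ne', Real.zero_rpow hl.ne'] at hlim
  have herase : ∑ l ∈ Finset.univ.erase k, α l ≤ 0 :=
    Finset.sum_nonpos fun l hl => hneg l (Finset.ne_of_mem_erase hl)
  refine ⟨hα, k, ?_, hneg⟩
  linarith [Finset.add_sum_erase Finset.univ α (Finset.mem_univ k)]

end Subadditivity

section Majorization

/-- The rows that can occur in a tuple with common support: zero, or positive in every entry. -/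
def rowCone (ι : Type*) : Set (ι → ℝ) := insert 0 (posOrthant ι)

variable {ι : Type*}

theorem zero_mem_rowCone : (0 : ι → ℝ) ∈ rowCone ι := mem_insert _ _

theorem posOrthant_subset_rowCone : (posOrthant ι : Set (ι → ℝ)) ⊆ rowCone ι :=
  subset_insert _ _

theorem nonneg_of_mem_rowCone {x : ι → ℝ} (hx : x ∈ rowCone ι) : 0 ≤ x := by
  rcases hx with rfl | hx
  · exact le_rfl
  · exact nonneg_of_mem_posOrthant hx

theorem add_mem_rowCone {x y : ι → ℝ} (hx : x ∈ rowCone ι) (hy : y ∈ rowCone ι) :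
    x + y ∈ rowCone ι := by
  rcases hx with rfl | hx
  · rwa [zero_add]
  · rcases hy with rfl | hy
    · rw [add_zero]
      exact posOrthant_subset_rowCone hx
    · exact posOrthant_subset_rowCone ((posOrthant _).add_mem hx hy)

theorem smul_mem_rowCone {t : ℝ} (ht : 0 ≤ t) {x : ι → ℝ} (hx : x ∈ rowCone ι) :
    t • x ∈ rowCone ι := by
  rcases ht.eq_or_lt with rfl | ht
  · rw [zero_smul]
    exact zero_mem_rowCone
  · rcases hx with rfl | hx
    · rw [smul_zero]
      exact zero_mem_rowCone
    · exact posOrthant_subset_rowCone ((posOrthant _).smul_mem ht hx)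

variable {d : ℕ}

theorem tupOK_iff_forall_mem_rowCone {n : ℕ} {P : Fin d → Fin n → ℝ} :
    TupOK P ↔ ∀ i, (P · i) ∈ rowCone (Fin d) := by
  refine ⟨fun hP i => ?_, fun hP => ⟨fun k i => nonneg_of_mem_rowCone (hP i) k, fun k l i => ?_⟩⟩
  · by_cases! h : ∃ k, P k i ≠ 0
    · obtain ⟨k, hk⟩ := h
      exact Or.inr fun l => (hP.1 l i).lt_of_ne' ((hP.2 k l i).1 hk)
    · exact Or.inl (funext h)
  · rcases hP i with h | h
    · simp only [show P k i = 0 from congrFun h k, show P l i = 0 from congrFun h l]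
    · exact iff_of_true (h k).ne' (h l).ne'

/-- Monotonicity under matrix majorization of the functional that sums `ψ` over the rows. Antitone
functionals are described by `MajMonotone (-ψ)`. -/
def MajMonotone (ψ : (Fin d → ℝ) → ℝ) : Prop :=
  ∀ (m n : ℕ) (P : Fin d → Fin m → ℝ) (Q : Fin d → Fin n → ℝ), TupOK P → TupOK Q → TupMaj P Q →
    ∑ i, ψ (Q · i) ≤ ∑ j, ψ (P · j)

variable {ψ : (Fin d → ℝ) → ℝ}

theorem MajMonotone.congr {χ : (Fin d → ℝ) → ℝ} (hψ : MajMonotone ψ)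
    (h : EqOn ψ χ (rowCone (Fin d))) : MajMonotone χ := fun m n P Q hP hQ hPQ => by
  have hcongr {n : ℕ} {P : Fin d → Fin n → ℝ} (hP : TupOK P) : ∑ i, χ (P · i) = ∑ i, ψ (P · i) :=
    Finset.sum_congr rfl fun i _ => (h (tupOK_iff_forall_mem_rowCone.1 hP i)).symm
  rw [hcongr hP, hcongr hQ]
  exact hψ m n P Q hP hQ hPQ

theorem SubadditiveOn.majMonotone (hψ : SubadditiveOn (rowCone (Fin d)) ψ)
    (hsmul : ∀ t : ℝ, 0 ≤ t → ∀ x ∈ rowCone (Fin d), ψ (t • x) = t * ψ x) : MajMonotone ψ := by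
  rintro m n P Q hP - ⟨T, hT, hTPQ⟩
  rw [tupOK_iff_forall_mem_rowCone] at hP
  have hψ0 : ψ 0 = 0 := by simpa using hsmul 0 le_rfl 0 zero_mem_rowCone
  have hrow (i : Fin n) : (Q · i) = ∑ j, T i j • (P · j) := by
    ext k
    simp only [← hTPQ, matVec, Finset.sum_apply, Pi.smul_apply, smul_eq_mul]
  calc ∑ i, ψ (Q · i)
      ≤ ∑ i, ∑ j, ψ (T i j • (P · j)) := Finset.sum_le_sum fun i _ => by
        rw [hrow]
        exact Finset.le_sum_of_subadditive_on_pred ψ (· ∈ rowCone (Fin d)) hψ0.le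
          (fun x y hx hy => hψ hx hy) (fun x y => add_mem_rowCone) _
          fun j _ => smul_mem_rowCone (hT.1 i j) (hP j)
    _ = ∑ j, (∑ i, T i j) * ψ (P · j) := by
        rw [Finset.sum_comm]
        simp only [hsmul _ (hT.1 _ _) _ (hP _), Finset.sum_mul]
    _ = ∑ j, ψ (P · j) := by simp only [hT.2, one_mul]

theorem MajMonotone.subadditiveOn (hψ : MajMonotone ψ) : SubadditiveOn (rowCone (Fin d)) ψ := by
  intro x hx y hy
  have hmaj : TupMaj (fun k i => ![x, y] i k) (fun k (_ : Fin 1) => (x + y) k) :=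
    ⟨fun _ _ => 1, ⟨by simp, by simp⟩, fun k => by ext; simp [matVec]⟩
  have hle := hψ 2 1 _ _ (tupOK_iff_forall_mem_rowCone.2 (Fin.forall_fin_two.2 ⟨hx, hy⟩))
    (tupOK_iff_forall_mem_rowCone.2 fun _ => add_mem_rowCone hx hy) hmaj
  rwa [Fin.sum_univ_one, Fin.sum_univ_two] at hle

theorem MajMonotone.map_add_smul (hψ : MajMonotone ψ) {x : Fin d → ℝ} (hx : x ∈ rowCone (Fin d))
    {s t : ℝ} (hs : 0 ≤ s) (ht : 0 ≤ t) (hst : s + t ≠ 0) :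
    ψ ((s + t) • x) = ψ (s • x) + ψ (t • x) := by
  have hst_nonneg : 0 ≤ s + t := add_nonneg hs ht
  have hsx := smul_mem_rowCone hs hx
  have htx := smul_mem_rowCone ht hx
  refine le_antisymm ?_ ?_
  · rw [add_smul]
    exact hψ.subadditiveOn hsx htx
  have hmaj : TupMaj (fun k (_ : Fin 1) => ((s + t) • x) k) (fun k i => ![s • x, t • x] i k) := by
    refine ⟨fun i _ => ![s / (s + t), t / (s + t)] i, ⟨?_, fun _ => ?_⟩, fun k => ?_⟩
    · exact Fin.forall_fin_two.2
        ⟨fun _ => div_nonneg hs hst_nonneg, fun _ => div_nonneg ht hst_nonneg⟩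
    · simp [← add_div, hst]
    · refine funext (Fin.forall_fin_two.2 ⟨?_, ?_⟩) <;> simp [matVec, ← mul_assoc, hst]
  have hle := hψ 1 2 _ _ (tupOK_iff_forall_mem_rowCone.2 fun _ => smul_mem_rowCone hst_nonneg hx)
    (tupOK_iff_forall_mem_rowCone.2 (Fin.forall_fin_two.2 ⟨hsx, htx⟩)) hmaj
  rwa [Fin.sum_univ_one, Fin.sum_univ_two] at hle

theorem memAminus_iff_majMonotone {α : Fin d → ℝ} :
    memAminus α ↔ ∑ k, α k = 1 ∧ MajMonotone (weightedGeomMean α) := by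
  refine ⟨fun hα => ⟨hα.1, ?_⟩, fun ⟨hα, h⟩ =>
    memAminus_of_subadditiveOn hα (h.subadditiveOn.mono posOrthant_subset_rowCone)⟩
  exact ((subadditiveOn_weightedGeomMean_of_memAminus hα).insert_zero
    (weightedGeomMean_zero hα.1)).majMonotone fun t ht x hx =>
      weightedGeomMean_smul hα.1 ht (nonneg_of_mem_rowCone hx)

theorem memAplus_iff_majMonotone_neg {α : Fin d → ℝ} :
    memAplus α ↔ ∑ k, α k = 1 ∧ MajMonotone (-weightedGeomMean α) := by
  refine ⟨fun hα => ⟨hα.1, ?_⟩, fun ⟨hα, h⟩ =>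
    memAplus_of_subadditiveOn_neg hα (h.subadditiveOn.mono posOrthant_subset_rowCone)⟩
  exact ((subadditiveOn_neg_weightedGeomMean_of_memAplus hα).insert_zero
    (by simp [weightedGeomMean_zero hα.1])).majMonotone fun t ht x hx => by
      simp only [Pi.neg_apply, weightedGeomMean_smul hα.1 ht (nonneg_of_mem_rowCone hx), mul_neg]

end Majorization

section Homomorphisms

variable {d : ℕ}

theorem fMat_eq_sum {α : Fin d → ℝ} (hα : ∑ k, α k = 1) {n : ℕ} (P : Fin d → Fin n → ℝ) :
    fMat α P = ∑ i, weightedGeomMean α (P · i) := by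
  refine Finset.sum_filter_of_ne fun i _ hi => ?_
  by_contra! hP
  exact hi ((congrArg (weightedGeomMean α) (funext hP)).trans (weightedGeomMean_zero hα))

theorem mPhiBase_fMat {α : Fin d → ℝ} (hα : ∑ k, α k = 1) :
    MPhiBase fun _ (P : Fin d → Fin _ → ℝ) => fMat α P := by
  simp only [MPhiBase, fMat_eq_sum hα]
  refine ⟨fun n P hP => ?_, fun n σ P _ => ?_, fun n P _ => ?_, fun m n P Q _ _ => ?_,
    fun m n P Q hP hQ => ?_, ?_, ?_⟩
  · exact Finset.sum_nonneg fun i _ => weightedGeomMean_nonneg fun k => hP.1 k i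
  · exact Equiv.sum_comp σ fun i => weightedGeomMean α (P · i)
  · simp only [Fin.sum_univ_castSucc, Fin.snoc_castSucc, Fin.snoc_last,
      weightedGeomMean_const hα le_rfl, add_zero]
  · simp only [Fin.sum_univ_add, Fin.append_left, Fin.append_right]
  · rw [← finProdFinEquiv.sum_comp, Fintype.sum_prod_type, Finset.sum_mul_sum]
    simp only [kronFin, kron, Equiv.symm_apply_apply]
    exact Finset.sum_congr rfl fun i _ => Finset.sum_congr rfl fun j _ =>
      weightedGeomMean_mul (fun k => hP.1 k i) fun k => hQ.1 k j
  · simp only [Finset.univ_unique, Finset.sum_singleton, weightedGeomMean_const hα zero_le_one]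
  · simp only [Finset.univ_unique, Finset.sum_singleton, weightedGeomMean_const hα le_rfl]

/-- The value of a functional on tuples at the tuple with the single row `x`. -/
def rowValue (Φ : ∀ n : ℕ, (Fin d → Fin n → ℝ) → ℝ) (x : Fin d → ℝ) : ℝ := Φ 1 fun k _ => x k

namespace MPhiBase

variable {Φ : ∀ n : ℕ, (Fin d → Fin n → ℝ) → ℝ} {x y : Fin d → ℝ}

theorem rowValue_zero (hΦ : MPhiBase Φ) : rowValue Φ 0 = 0 := hΦ.2.2.2.2.2.2

theorem rowValue_one (hΦ : MPhiBase Φ) : rowValue Φ 1 = 1 := hΦ.2.2.2.2.2.1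

theorem rowValue_nonneg (hΦ : MPhiBase Φ) (hx : x ∈ rowCone (Fin d)) : 0 ≤ rowValue Φ x :=
  hΦ.1 _ _ (tupOK_iff_forall_mem_rowCone.2 fun _ => hx)

theorem rowValue_mul (hΦ : MPhiBase Φ) (hx : x ∈ rowCone (Fin d)) (hy : y ∈ rowCone (Fin d)) :
    rowValue Φ (x * y) = rowValue Φ x * rowValue Φ y := by
  obtain ⟨-, -, -, -, hmul, -, -⟩ := hΦ
  exact hmul 1 1 _ _ (tupOK_iff_forall_mem_rowCone.2 fun _ => hx)
    (tupOK_iff_forall_mem_rowCone.2 fun _ => hy)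

theorem rowValue_pos (hΦ : MPhiBase Φ) (hx : x ∈ posOrthant (Fin d)) : 0 < rowValue Φ x := by
  have hxC := posOrthant_subset_rowCone hx
  have hinv : rowValue Φ x * rowValue Φ x⁻¹ = 1 := by
    rw [← hΦ.rowValue_mul hxC (posOrthant_subset_rowCone (inv_mem_posOrthant hx)),
      ← hΦ.rowValue_one]
    exact congrArg _ (funext fun k => mul_inv_cancel₀ (hx k).ne')
  exact (hΦ.rowValue_nonneg hxC).lt_of_ne' (left_ne_zero_of_mul_eq_one hinv)

theorem eq_sum_rowValue (hΦ : MPhiBase Φ) {n : ℕ} {P : Fin d → Fin n → ℝ} (hP : TupOK P) :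
    Φ n P = ∑ i, rowValue Φ (P · i) := by
  obtain ⟨-, -, hsnoc, hadd, -, -, hzero⟩ := hΦ
  induction n with
  | zero =>
    have hzeros : (fun k => Fin.snoc (P k) 0 : Fin d → Fin 1 → ℝ) = fun _ _ => 0 :=
      funext₂ fun k i => by rw [Fin.fin_one_eq_zero i]; exact Fin.snoc_last _ _
    rw [← hsnoc 0 P hP, hzeros, hzero, Fin.sum_univ_zero]
  | succ n ih =>
    rw [tupOK_iff_forall_mem_rowCone] at hP
    have hinit : TupOK fun k i => P k (Fin.castAdd 1 i) :=
      tupOK_iff_forall_mem_rowCone.2 fun i => hP (Fin.castAdd 1 i)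
    have hlast : TupOK fun k i => P k (Fin.natAdd n i) :=
      tupOK_iff_forall_mem_rowCone.2 fun i => hP (Fin.natAdd n i)
    have happend := hadd n 1 _ _ hinit hlast
    simp only [Fin.append_castAdd_natAdd] at happend
    rw [happend, ih hinit, Fin.sum_univ_castSucc]
    congr 2
    exact funext₂ fun k i => by rw [Subsingleton.elim i 0]; rfl

theorem majMonotone_rowValue (hΦ : MPhiBase Φ)
    (h : ∀ (m n : ℕ) (P : Fin d → Fin m → ℝ) (Q : Fin d → Fin n → ℝ),
      TupOK P → TupOK Q → TupMaj P Q → Φ n Q ≤ Φ m P) : MajMonotone (rowValue Φ) :=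
  fun m n P Q hP hQ hPQ => by
    rw [← hΦ.eq_sum_rowValue hP, ← hΦ.eq_sum_rowValue hQ]
    exact h m n P Q hP hQ hPQ

theorem majMonotone_neg_rowValue (hΦ : MPhiBase Φ)
    (h : ∀ (m n : ℕ) (P : Fin d → Fin m → ℝ) (Q : Fin d → Fin n → ℝ),
      TupOK P → TupOK Q → TupMaj P Q → Φ m P ≤ Φ n Q) : MajMonotone (-rowValue Φ) :=
  fun m n P Q hP hQ hPQ => by
    simp only [Pi.neg_apply, Finset.sum_neg_distrib, ← hΦ.eq_sum_rowValue hP,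
      ← hΦ.eq_sum_rowValue hQ, neg_le_neg_iff]
    exact h m n P Q hP hQ hPQ

theorem rowValue_add_smul (hΦ : MPhiBase Φ)
    (h : MajMonotone (rowValue Φ) ∨ MajMonotone (-rowValue Φ)) (hx : x ∈ rowCone (Fin d)) {s t : ℝ}
    (hs : 0 ≤ s) (ht : 0 ≤ t) :
    rowValue Φ ((s + t) • x) = rowValue Φ (s • x) + rowValue Φ (t • x) := by
  rcases eq_or_ne (s + t) 0 with hst | hst
  · obtain ⟨rfl, rfl⟩ := (add_eq_zero_iff_of_nonneg hs ht).1 hst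
    simp [hΦ.rowValue_zero]
  · rcases h with h | h
    · exact h.map_add_smul hx hs ht hst
    · simpa only [Pi.neg_apply, ← neg_add, neg_inj] using h.map_add_smul hx hs ht hst

theorem rowValue_smul_one (hΦ : MPhiBase Φ)
    (h : MajMonotone (rowValue Φ) ∨ MajMonotone (-rowValue Φ)) {t : ℝ} (ht : 0 ≤ t) :
    rowValue Φ (t • 1) = t := by
  have hone := posOrthant_subset_rowCone (one_mem_posOrthant (ι := Fin d))
  let g : ℝ≥0 →+* ℝ :=
    { toFun t := rowValue Φ ((t : ℝ) • 1)
      map_zero' := by simp [hΦ.rowValue_zero]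
      map_one' := by simp [hΦ.rowValue_one]
      map_add' s t := hΦ.rowValue_add_smul h hone s.2 t.2
      map_mul' s t := by
        rw [← hΦ.rowValue_mul (smul_mem_rowCone s.coe_nonneg hone)
          (smul_mem_rowCone t.coe_nonneg hone),
          smul_mul_smul_comm, mul_one, NNReal.coe_mul] }
  exact nnreal_ringHom_apply g ⟨t, ht⟩

theorem rowValue_smul (hΦ : MPhiBase Φ)
    (h : MajMonotone (rowValue Φ) ∨ MajMonotone (-rowValue Φ)) {t : ℝ} (ht : 0 ≤ t)
    (hx : x ∈ rowCone (Fin d)) : rowValue Φ (t • x) = t * rowValue Φ x := by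
  rw [← smul_one_mul, hΦ.rowValue_mul
    (smul_mem_rowCone ht (posOrthant_subset_rowCone one_mem_posOrthant)) hx,
    hΦ.rowValue_smul_one h ht]

theorem continuousOn_rowValue (hΦ : MPhiBase Φ)
    (h : MajMonotone (rowValue Φ) ∨ MajMonotone (-rowValue Φ)) :
    ContinuousOn (rowValue Φ) (posOrthant (Fin d)) := by
  have hsmul (c : ℝ) (hc : 0 < c) (x : Fin d → ℝ) (hx : x ∈ posOrthant (Fin d)) :=
    hΦ.rowValue_smul h hc.le (posOrthant_subset_rowCone hx)
  rcases h with h | h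
  · exact ((h.subadditiveOn.mono posOrthant_subset_rowCone).convexOn hsmul).continuousOn
      isOpen_posOrthant
  · rw [← neg_neg (rowValue Φ)]
    refine (ConvexOn.continuousOn isOpen_posOrthant <|
      (h.subadditiveOn.mono posOrthant_subset_rowCone).convexOn fun c hc x hx => ?_).neg
    simp only [Pi.neg_apply, hsmul c hc x hx, mul_neg]

theorem exists_rowValue_eqOn_weightedGeomMean (hΦ : MPhiBase Φ)
    (h : MajMonotone (rowValue Φ) ∨ MajMonotone (-rowValue Φ)) :
    ∃ α : Fin d → ℝ, ∑ k, α k = 1 ∧ EqOn (rowValue Φ) (weightedGeomMean α) (rowCone (Fin d)) := by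
  obtain ⟨α, heq⟩ := exists_eqOn_weightedGeomMean (fun x => hΦ.rowValue_pos)
    (fun x hx y hy => hΦ.rowValue_mul (posOrthant_subset_rowCone hx) (posOrthant_subset_rowCone hy))
    (hΦ.continuousOn_rowValue h)
  have hα : ∑ k, α k = 1 := by
    have htwo := heq ((posOrthant _).smul_mem two_pos one_mem_posOrthant)
    rw [hΦ.rowValue_smul_one h two_pos.le] at htwo
    simp only [weightedGeomMean, Pi.smul_apply, Pi.one_apply, smul_eq_mul, mul_one,
      ← Real.rpow_sum_of_pos two_pos] at htwo
    exact (Real.rpow_right_inj two_pos (by norm_num)).1 (htwo.symm.trans (Real.rpow_one 2).symm)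
  refine ⟨α, hα, ?_⟩
  rintro x (rfl | hx)
  · rw [hΦ.rowValue_zero, weightedGeomMean_zero hα]
  · exact heq hx

theorem eq_fMat (hΦ : MPhiBase Φ) {α : Fin d → ℝ} (hα : ∑ k, α k = 1)
    (heq : EqOn (rowValue Φ) (weightedGeomMean α) (rowCone (Fin d))) {n : ℕ}
    {P : Fin d → Fin n → ℝ} (hP : TupOK P) : Φ n P = fMat α P := by
  rw [hΦ.eq_sum_rowValue hP, fMat_eq_sum hα]
  exact Finset.sum_congr rfl fun i _ => heq (tupOK_iff_forall_mem_rowCone.1 hP i)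

end MPhiBase

end Homomorphisms

/-- **Classification of monotone homomorphisms on the matrix majorization
semiring.**  A homomorphism that is monotone under matrix majorization is
`f_α` for some `α ∈ A₋`, and one that is antitone is `f_α` for `α ∈ A₊`;
conversely all these `f_α` have the listed properties. -/
theorem classification_monotone_homs_matrix {d : ℕ} (hd : 1 ≤ d) :
    (∀ Φ : ∀ n : ℕ, (Fin d → Fin n → ℝ) → ℝ, MPhiBase Φ →
      (∀ (m n : ℕ) (P : Fin d → Fin m → ℝ) (Q : Fin d → Fin n → ℝ),
        TupOK P → TupOK Q → TupMaj P Q → Φ n Q ≤ Φ m P) →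
      ∃ α : Fin d → ℝ, memAminus α ∧
        ∀ (n : ℕ) (P : Fin d → Fin n → ℝ), TupOK P → Φ n P = fMat α P) ∧
    (∀ α : Fin d → ℝ, memAminus α →
      MPhiBase (fun n P => fMat α P) ∧
      ∀ (m n : ℕ) (P : Fin d → Fin m → ℝ) (Q : Fin d → Fin n → ℝ),
        TupOK P → TupOK Q → TupMaj P Q → fMat α Q ≤ fMat α P) ∧
    (∀ Φ : ∀ n : ℕ, (Fin d → Fin n → ℝ) → ℝ, MPhiBase Φ →
      (∀ (m n : ℕ) (P : Fin d → Fin m → ℝ) (Q : Fin d → Fin n → ℝ),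
        TupOK P → TupOK Q → TupMaj P Q → Φ m P ≤ Φ n Q) →
      ∃ α : Fin d → ℝ, memAplus α ∧
        ∀ (n : ℕ) (P : Fin d → Fin n → ℝ), TupOK P → Φ n P = fMat α P) ∧
    (∀ α : Fin d → ℝ, memAplus α →
      MPhiBase (fun n P => fMat α P) ∧
      ∀ (m n : ℕ) (P : Fin d → Fin m → ℝ) (Q : Fin d → Fin n → ℝ),
        TupOK P → TupOK Q → TupMaj P Q → fMat α P ≤ fMat α Q) := by
  refine ⟨fun Φ hΦ hmono => ?_, fun α hα => ⟨mPhiBase_fMat hα.1, fun m n P Q hP hQ hPQ => ?_⟩,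
    fun Φ hΦ hanti => ?_, fun α hα => ⟨mPhiBase_fMat hα.1, fun m n P Q hP hQ hPQ => ?_⟩⟩
  · have hφ := hΦ.majMonotone_rowValue hmono
    obtain ⟨α, hα, heq⟩ := hΦ.exists_rowValue_eqOn_weightedGeomMean (Or.inl hφ)
    exact ⟨α, memAminus_iff_majMonotone.2 ⟨hα, hφ.congr heq⟩, fun n P => hΦ.eq_fMat hα heq⟩
  · simp only [fMat_eq_sum hα.1]
    exact (memAminus_iff_majMonotone.1 hα).2 m n P Q hP hQ hPQ
  · have hφ := hΦ.majMonotone_neg_rowValue hanti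
    obtain ⟨α, hα, heq⟩ := hΦ.exists_rowValue_eqOn_weightedGeomMean (Or.inr hφ)
    have hneg := hφ.congr fun x hx => congrArg Neg.neg (heq hx)
    exact ⟨α, memAplus_iff_majMonotone_neg.2 ⟨hα, hneg⟩, fun n P => hΦ.eq_fMat hα heq⟩
  · have hmaj := (memAplus_iff_majMonotone_neg.1 hα).2 m n P Q hP hQ hPQ
    simpa only [fMat_eq_sum hα.1, Pi.neg_apply, Finset.sum_neg_distrib, neg_le_neg_iff] using hmaj
end
end

section
/- Let d ≥ 1 and let P = (p⁽¹⁾,…,p⁽ᵈ⁾) be a d-tuple of probability vectors of length n sharing a common support. (i) For every α ∈ (A₊ ∪ A₋) \ {e₁,…,e_d}, one has D_α(P) ≥ 0, with equality if and only if all columns p⁽ᵏ⁾ with α_k ≠ 0 are equal. (ii) For every β ∈ B₋ \ {0}, one has D^T_β(P) ≥ 0, with equality if and only if all columns p⁽ᵏ⁾ with β_k ≠ 0 are equal. -/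
open scoped BigOperators NNReal

noncomputable section

/-!
The product `∏ k, z k ^ α k` is compared with its linearization `∑ k, α k * z k`.  For `α ∈ A₊` the
weighted AM–GM inequality says that the product is the smaller one; for `α ∈ A₋` the inequality is
reversed, because `log x ≤ x - 1` changes direction when multiplied by the nonpositive weights.
Equality holds exactly when all `z k` with `α k ≠ 0` are equal.  Summing over the common support
turns the linearization into `∑ k, α k = 1`, and the prefactor `1 / (α_max - 1)` has the right sign.

For `β ∈ B₋` with leading index `k`, the weight `β + e_k` lies in `A₋`, and its power sum `fMat` is
the average, with respect to the probability vector `p⁽ᵏ⁾`, of the products whose maximum enters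
`D^𝕋_β`.
-/

section WeightedMeans

variable {ι : Type*} {s : Finset ι} {w x z : ι → ℝ} {a : ℝ} {k : ι}

lemma prod_rpow_eq_rpow_sum_of_forall_eq (ha : 0 < a) (h : ∀ i ∈ s, w i ≠ 0 → z i = a) :
    ∏ i ∈ s, z i ^ w i = a ^ ∑ i ∈ s, w i := by
  rw [Real.rpow_sum_of_pos ha]
  refine Finset.prod_congr rfl fun i hi => ?_
  by_cases hw : w i = 0
  · simp only [hw, Real.rpow_zero]
  · rw [h i hi hw]

lemma prod_rpow_eq_exp_sum_mul_log (hx : ∀ i ∈ s, 0 < x i) :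
    ∏ i ∈ s, x i ^ w i = Real.exp (∑ i ∈ s, w i * Real.log (x i)) := by
  rw [Real.exp_sum]
  refine Finset.prod_congr rfl fun i hi => ?_
  rw [Real.rpow_def_of_pos (hx i hi), mul_comm]

lemma mul_sub_one_le_mul_log {c y : ℝ} (hy : 0 < y) (hc : c ≤ 0 ∨ y = 1) :
    c * (y - 1) ≤ c * Real.log y := by
  rcases hc with hc | rfl
  · exact mul_le_mul_of_nonpos_left (Real.log_le_sub_one_of_pos hy) hc
  · simp only [sub_self, Real.log_one, le_refl]

lemma eq_one_of_sum_mul_log_le (hx : ∀ i ∈ s, 0 < x i) (hw : ∀ i ∈ s, w i ≤ 0 ∨ x i = 1)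
    (h : ∑ i ∈ s, w i * Real.log (x i) ≤ ∑ i ∈ s, w i * (x i - 1)) {i : ι} (hi : i ∈ s)
    (hwi : w i ≠ 0) : x i = 1 := by
  have hle : ∀ j ∈ s, w j * (x j - 1) ≤ w j * Real.log (x j) := fun j hj =>
    mul_sub_one_le_mul_log (hx j hj) (hw j hj)
  have heq : w i * (x i - 1) = w i * Real.log (x i) :=
    (Finset.sum_eq_sum_iff_of_le hle).1 (le_antisymm (Finset.sum_le_sum hle) h) i hi
  by_contra hne
  exact (Real.log_lt_sub_one_of_pos (hx i hi) hne).ne' (mul_left_cancel₀ hwi heq)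

lemma one_add_sum_mul_log_le_prod_rpow (hx : ∀ i ∈ s, 0 < x i) :
    1 + ∑ i ∈ s, w i * Real.log (x i) ≤ ∏ i ∈ s, x i ^ w i := by
  rw [prod_rpow_eq_exp_sum_mul_log hx, add_comm]
  exact Real.add_one_le_exp _

lemma sum_mul_eq_mul_one_add_sum_mul_div_sub_one (ha : a ≠ 0) (hw : ∑ i ∈ s, w i = 1) :
    ∑ i ∈ s, w i * z i = a * (1 + ∑ i ∈ s, w i * (z i / a - 1)) := by
  have hterm : ∀ i, w i * z i = a * (w i * (z i / a - 1)) + a * w i := fun i => by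
    field_simp
    ring
  simp only [hterm, Finset.sum_add_distrib, ← Finset.mul_sum, hw]
  ring

lemma prod_rpow_eq_mul_prod_div_rpow (ha : 0 < a) (hw : ∑ i ∈ s, w i = 1)
    (hz : ∀ i ∈ s, 0 < z i) : ∏ i ∈ s, z i ^ w i = a * ∏ i ∈ s, (z i / a) ^ w i := by
  have hdiv : ∏ i ∈ s, (z i / a) ^ w i = (∏ i ∈ s, z i ^ w i) / a := by
    rw [Finset.prod_congr rfl fun i hi => Real.div_rpow (hz i hi).le ha.le (w i),
      Finset.prod_div_distrib, ← Real.rpow_sum_of_pos ha, hw, Real.rpow_one]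
  rw [hdiv, mul_div_cancel₀ _ ha.ne']

lemma nonpos_or_div_eq_one (hz : ∀ i ∈ s, 0 < z i) (hw : ∀ i ∈ s, i ≠ k → w i ≤ 0) :
    ∀ i ∈ s, w i ≤ 0 ∨ z i / z k = 1 := by
  intro i hi
  by_cases hik : i = k
  · subst hik
    exact Or.inr (div_self (hz i hi).ne')
  · exact Or.inl (hw i hi hik)

theorem arith_mean_le_geom_mean_weighted_of_nonpos_of_ne (hk : k ∈ s)
    (hw : ∀ i ∈ s, i ≠ k → w i ≤ 0) (hw' : ∑ i ∈ s, w i = 1) (hz : ∀ i ∈ s, 0 < z i) :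
    ∑ i ∈ s, w i * z i ≤ ∏ i ∈ s, z i ^ w i := by
  have hx : ∀ i ∈ s, 0 < z i / z k := fun i hi => div_pos (hz i hi) (hz k hk)
  calc ∑ i ∈ s, w i * z i
      = z k * (1 + ∑ i ∈ s, w i * (z i / z k - 1)) :=
        sum_mul_eq_mul_one_add_sum_mul_div_sub_one (hz k hk).ne' hw'
    _ ≤ z k * (1 + ∑ i ∈ s, w i * Real.log (z i / z k)) := by
        refine mul_le_mul_of_nonneg_left (add_le_add_right ?_ 1) (hz k hk).le
        exact Finset.sum_le_sum fun i hi =>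
          mul_sub_one_le_mul_log (hx i hi) (nonpos_or_div_eq_one hz hw i hi)
    _ ≤ z k * ∏ i ∈ s, (z i / z k) ^ w i :=
        mul_le_mul_of_nonneg_left (one_add_sum_mul_log_le_prod_rpow hx) (hz k hk).le
    _ = ∏ i ∈ s, z i ^ w i := (prod_rpow_eq_mul_prod_div_rpow (hz k hk) hw' hz).symm

theorem geom_mean_eq_arith_mean_weighted_iff_of_nonpos_of_ne (hk : k ∈ s)
    (hw : ∀ i ∈ s, i ≠ k → w i ≤ 0) (hw' : ∑ i ∈ s, w i = 1) (hz : ∀ i ∈ s, 0 < z i) :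
    ∏ i ∈ s, z i ^ w i = ∑ i ∈ s, w i * z i ↔ ∀ i ∈ s, w i ≠ 0 → z i = z k := by
  have hx : ∀ i ∈ s, 0 < z i / z k := fun i hi => div_pos (hz i hi) (hz k hk)
  constructor
  · intro h i hi hwi
    rw [prod_rpow_eq_mul_prod_div_rpow (hz k hk) hw' hz,
      sum_mul_eq_mul_one_add_sum_mul_div_sub_one (hz k hk).ne' hw'] at h
    have hlog : 1 + ∑ i ∈ s, w i * Real.log (z i / z k)
        ≤ 1 + ∑ i ∈ s, w i * (z i / z k - 1) :=
      (one_add_sum_mul_log_le_prod_rpow hx).trans (mul_left_cancel₀ (hz k hk).ne' h).le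
    exact eq_of_div_eq_one <| eq_one_of_sum_mul_log_le hx (nonpos_or_div_eq_one hz hw)
      (le_of_add_le_add_left hlog) hi hwi
  · intro h
    have hterm : ∀ i ∈ s, w i * z i = w i * z k := fun i hi => by
      rcases eq_or_ne (w i) 0 with hwi | hwi
      · simp only [hwi, zero_mul]
      · rw [h i hi hwi]
    rw [prod_rpow_eq_rpow_sum_of_forall_eq (hz k hk) h, Finset.sum_congr rfl hterm,
      ← Finset.sum_mul, hw', Real.rpow_one, one_mul]

end WeightedMeans

section SingleVectors

variable {ι M : Type*} [Fintype ι] [DecidableEq ι] [AddCommGroup M] [PartialOrder M]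
  [IsOrderedAddMonoid M] {f : ι → M} {k : ι}

lemma eq_single_of_sum_eq_of_nonneg (hf : ∀ i, i ≠ k → 0 ≤ f i) (h : ∑ i, f i = f k) :
    f = Pi.single k (f k) := by
  have hrest : ∑ i ∈ Finset.univ.erase k, f i = 0 := by
    rwa [← Finset.add_sum_erase _ f (Finset.mem_univ k), add_eq_left] at h
  funext i
  rcases eq_or_ne i k with rfl | hik
  · rw [Pi.single_eq_same]
  · rw [Pi.single_eq_of_ne hik]
    exact (Finset.sum_eq_zero_iff_of_nonneg fun j hj => hf j (Finset.ne_of_mem_erase hj)).1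
      hrest i (Finset.mem_erase.2 ⟨hik, Finset.mem_univ i⟩)

lemma eq_single_of_sum_eq_of_nonpos (hf : ∀ i, i ≠ k → f i ≤ 0) (h : ∑ i, f i = f k) :
    f = Pi.single k (f k) := by
  refine neg_injective ?_
  rw [← Pi.single_neg]
  refine eq_single_of_sum_eq_of_nonneg (f := -f) (fun i hi => neg_nonneg.2 (hf i hi)) ?_
  simp only [Pi.neg_apply, Finset.sum_neg_distrib, h]

end SingleVectors

section ExponentSets

variable {d : ℕ} {α β z : Fin d → ℝ} {k : Fin d}

lemma memAplus.iSup_lt_one (hα : memAplus α) (hb : notBasis α) : (⨆ k, α k) < 1 := by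
  obtain ⟨l, -, -⟩ := Finset.exists_ne_zero_of_sum_ne_zero (hα.1.trans_ne one_ne_zero)
  have : Nonempty (Fin d) := ⟨l⟩
  obtain ⟨k, hk⟩ := exists_eq_ciSup_of_finite (f := α)
  have hle : α k ≤ 1 := hα.1 ▸ Finset.single_le_sum (fun l _ => hα.2 l) (Finset.mem_univ k)
  refine hk ▸ lt_of_le_of_ne hle fun h => hb k ?_
  rw [eq_single_of_sum_eq_of_nonneg (fun l _ => hα.2 l) (hα.1.trans h.symm), h]

lemma memAminus.one_lt_iSup (hα : memAminus α) (hb : notBasis α) : 1 < ⨆ k, α k := by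
  obtain ⟨hsum, k, hk, hneg⟩ := hα
  refine lt_of_lt_of_le (lt_of_le_of_ne hk fun h => hb k ?_) (le_ciSup (Finite.bddAbove_range α) k)
  rw [eq_single_of_sum_eq_of_nonpos hneg (hsum.trans h), ← h]

lemma memBminus.exists_pos (hβ : memBminus β) (h0 : β ≠ 0) :
    ∃ k, 0 < β k ∧ ∀ l, l ≠ k → β l ≤ 0 := by
  obtain ⟨hsum, k, hk, hneg⟩ := hβ
  refine ⟨k, lt_of_le_of_ne hk fun h => h0 ?_, hneg⟩
  rw [eq_single_of_sum_eq_of_nonpos hneg (hsum.trans h), ← h, Pi.single_zero]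

lemma memAminus_add_single (hsum : ∑ l, β l = 0) (hk : 0 ≤ β k) (hneg : ∀ l, l ≠ k → β l ≤ 0) :
    memAminus (β + Pi.single k 1) := by
  refine ⟨?_, k, ?_, fun l hl => ?_⟩
  · simp only [Pi.add_apply, Finset.sum_add_distrib, hsum, Finset.sum_pi_single', Finset.mem_univ,
      if_true, zero_add]
  · simpa only [Pi.add_apply, Pi.single_eq_same, le_add_iff_nonneg_left] using hk
  · simpa only [Pi.add_apply, Pi.single_eq_of_ne hl, add_zero] using hneg l hl

lemma memAplus.prod_rpow_le_sum (hα : memAplus α) (hz : ∀ k, 0 ≤ z k) :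
    ∏ k, z k ^ α k ≤ ∑ k, α k * z k :=
  Real.geom_mean_le_arith_mean_weighted _ _ _ (fun k _ => hα.2 k) hα.1 fun k _ => hz k

lemma memAminus.sum_le_prod_rpow (hα : memAminus α) (hz : ∀ k, 0 < z k) :
    ∑ k, α k * z k ≤ ∏ k, z k ^ α k := by
  obtain ⟨hsum, k, -, hneg⟩ := hα
  exact arith_mean_le_geom_mean_weighted_of_nonpos_of_ne (Finset.mem_univ k)
    (fun l _ => hneg l) hsum fun l _ => hz l

lemma prod_rpow_eq_sum_iff (hα : memAplus α ∨ memAminus α) (hz : ∀ k, 0 < z k) :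
    ∏ k, z k ^ α k = ∑ k, α k * z k ↔ ∀ k l, α k ≠ 0 → α l ≠ 0 → z k = z l := by
  rcases hα with ⟨hsum, hnonneg⟩ | ⟨hsum, k, hk, hneg⟩
  · rw [Real.geom_mean_eq_arith_mean_weighted_iff_of_nonneg _ _ _ (fun k _ => hnonneg k) hsum
      fun k _ => (hz k).le]
    exact ⟨fun h k l hk hl => h k (Finset.mem_univ k) hk l (Finset.mem_univ l) hl,
      fun h k _ hk l _ hl => h k l hk hl⟩
  · rw [geom_mean_eq_arith_mean_weighted_iff_of_nonpos_of_ne (Finset.mem_univ k)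
      (fun l _ => hneg l) hsum fun l _ => hz l]
    exact ⟨fun h i j hi hj => (h i (Finset.mem_univ i) hi).trans (h j (Finset.mem_univ j) hj).symm,
      fun h i _ hi => h i k hi (by positivity)⟩

end ExponentSets

section CommonSupport

variable {d n : ℕ} {P : Fin d → Fin n → ℝ} {i : Fin n}

lemma TupOK.pos (hP : TupOK P) (hi : i ∈ suppIdx P) (k : Fin d) : 0 < P k i := by
  obtain ⟨l, hl⟩ := (Finset.mem_filter.1 hi).2
  exact (hP.1 k i).lt_of_ne' ((hP.2 l k i).1 hl)

lemma eq_zero_of_notMem_suppIdx (hi : i ∉ suppIdx P) (k : Fin d) : P k i = 0 :=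
  of_not_not fun h => hi (Finset.mem_filter.2 ⟨Finset.mem_univ i, k, h⟩)

lemma sum_suppIdx (P : Fin d → Fin n → ℝ) (k : Fin d) : ∑ i ∈ suppIdx P, P k i = ∑ i, P k i :=
  Finset.sum_subset (Finset.subset_univ _) fun _ _ hi => eq_zero_of_notMem_suppIdx hi k

lemma suppIdx_nonempty {k : Fin d} (h : ∑ i, P k i ≠ 0) : (suppIdx P).Nonempty :=
  Finset.nonempty_of_sum_ne_zero ((sum_suppIdx P k).trans_ne h)

lemma column_eq_iff {k l : Fin d} : P k = P l ↔ ∀ i ∈ suppIdx P, P k i = P l i := by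
  refine ⟨fun h i _ => congrFun h i, fun h => funext fun i => ?_⟩
  by_cases hi : i ∈ suppIdx P
  · exact h i hi
  · rw [eq_zero_of_notMem_suppIdx hi, eq_zero_of_notMem_suppIdx hi]

end CommonSupport

section PowerSums

variable {d n : ℕ} {P : Fin d → Fin n → ℝ} {α β : Fin d → ℝ} {k : Fin d}

lemma sum_suppIdx_sum_mul (α : Fin d → ℝ) (P : Fin d → Fin n → ℝ) :
    ∑ i ∈ suppIdx P, ∑ k, α k * P k i = ∑ k, α k * ∑ i, P k i := by
  rw [Finset.sum_comm]
  simp only [← Finset.mul_sum, sum_suppIdx]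

lemma TupOK.fMat_pos (hP : TupOK P) (hne : (suppIdx P).Nonempty) : 0 < fMat α P :=
  Finset.sum_pos (fun _ hi => Finset.prod_pos fun k _ => Real.rpow_pos_of_pos (hP.pos hi k) _) hne

theorem fMat_le_sum_mul_sum (hα : memAplus α) (hP : ∀ k i, 0 ≤ P k i) :
    fMat α P ≤ ∑ k, α k * ∑ i, P k i := by
  rw [← sum_suppIdx_sum_mul]
  exact Finset.sum_le_sum fun i _ => hα.prod_rpow_le_sum fun k => hP k i

theorem sum_mul_sum_le_fMat (hα : memAminus α) (hP : TupOK P) :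
    ∑ k, α k * ∑ i, P k i ≤ fMat α P := by
  rw [← sum_suppIdx_sum_mul]
  exact Finset.sum_le_sum fun i hi => hα.sum_le_prod_rpow fun k => hP.pos hi k

theorem fMat_eq_sum_mul_sum_iff (hα : memAplus α ∨ memAminus α) (hP : TupOK P) :
    fMat α P = ∑ k, α k * ∑ i, P k i ↔ ∀ k l, α k ≠ 0 → α l ≠ 0 → P k = P l := by
  have hpointwise : fMat α P = ∑ k, α k * ∑ i, P k i ↔
      ∀ i ∈ suppIdx P, ∏ k, P k i ^ α k = ∑ k, α k * P k i := by
    rw [← sum_suppIdx_sum_mul, fMat]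
    rcases hα with hα | hα
    · exact Finset.sum_eq_sum_iff_of_le fun i _ => hα.prod_rpow_le_sum fun k => hP.1 k i
    · rw [eq_comm, Finset.sum_eq_sum_iff_of_le fun i hi => hα.sum_le_prod_rpow (hP.pos hi)]
      exact forall₂_congr fun i _ => eq_comm
  rw [hpointwise]
  refine (forall₂_congr fun i (hi : i ∈ suppIdx P) =>
    prod_rpow_eq_sum_iff hα (hP.pos hi)).trans ?_
  simp only [column_eq_iff]
  exact ⟨fun h k l hk hl i hi => h i hi k l hk hl, fun h i hi k l hk hl => h k l hk hl i hi⟩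

theorem fMat_eq_one_iff (hα : memAplus α ∨ memAminus α) (hP : TupOK P)
    (hmass : ∀ k, ∑ i, P k i = 1) :
    fMat α P = 1 ↔ ∀ k l, α k ≠ 0 → α l ≠ 0 → P k = P l := by
  rw [← fMat_eq_sum_mul_sum_iff hα hP]
  simp only [hmass, mul_one, hα.elim And.left And.left]

theorem fMat_le_one (hα : memAplus α) (hP : ∀ k i, 0 ≤ P k i)
    (hmass : ∀ k, ∑ i, P k i = 1) : fMat α P ≤ 1 := by
  simpa only [hmass, mul_one, hα.1] using fMat_le_sum_mul_sum hα hP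

theorem one_le_fMat (hα : memAminus α) (hP : TupOK P) (hmass : ∀ k, ∑ i, P k i = 1) :
    1 ≤ fMat α P := by
  simpa only [hmass, mul_one, hα.1] using sum_mul_sum_le_fMat hα hP

/-- The tropical counterpart of `fMat`: the maximum over the common support of
`∏_k (p_i^{(k)})^{β_k}`.  Indices outside the support contribute an empty supremum, that is `0`,
which does not affect the maximum of positive products. -/
def fMatT (β : Fin d → ℝ) (P : Fin d → Fin n → ℝ) : ℝ :=
  ⨆ i ∈ suppIdx P, ∏ k, P k i ^ β k

lemma prod_rpow_le_fMatT {i : Fin n} (hi : i ∈ suppIdx P) : ∏ k, P k i ^ β k ≤ fMatT β P := by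
  rw [← ciSup_pos (f := fun _ : i ∈ suppIdx P => ∏ k, P k i ^ β k) hi]
  exact le_ciSup (f := fun i => ⨆ _ : i ∈ suppIdx P, ∏ k, P k i ^ β k) (Finite.bddAbove_range _) i

lemma fMatT_le {c : ℝ} (hc : 0 ≤ c) (h : ∀ i ∈ suppIdx P, ∏ k, P k i ^ β k ≤ c) :
    fMatT β P ≤ c :=
  Real.iSup_le (fun i => Real.iSup_le (h i) hc) hc

lemma TupOK.fMat_add_single (hP : TupOK P) :
    fMat (β + Pi.single k 1) P = ∑ i ∈ suppIdx P, P k i * ∏ l, P l i ^ β l := by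
  refine Finset.sum_congr rfl fun i hi => ?_
  have hsingle : ∏ l, P l i ^ (Pi.single k 1 : Fin d → ℝ) l = P k i := by
    rw [Finset.prod_eq_single_of_mem k (Finset.mem_univ k) fun l _ hl => by
      rw [Pi.single_eq_of_ne hl, Real.rpow_zero], Pi.single_eq_same, Real.rpow_one]
  simp only [Pi.add_apply, Real.rpow_add (hP.pos hi _), Finset.prod_mul_distrib, hsingle, mul_comm]

theorem fMat_add_single_le_mul_fMatT (hP : TupOK P) :
    fMat (β + Pi.single k 1) P ≤ (∑ i, P k i) * fMatT β P := by
  rw [hP.fMat_add_single, ← sum_suppIdx, Finset.sum_mul]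
  exact Finset.sum_le_sum fun i hi =>
    mul_le_mul_of_nonneg_left (prod_rpow_le_fMatT hi) (hP.1 k i)

theorem one_le_fMatT (hβ : memBminus β) (hP : TupOK P) (hmass : ∀ k, ∑ i, P k i = 1) :
    1 ≤ fMatT β P := by
  obtain ⟨hsum, k, hk, hneg⟩ := hβ
  calc 1 ≤ fMat (β + Pi.single k 1) P :=
        one_le_fMat (memAminus_add_single hsum hk hneg) hP hmass
    _ ≤ fMatT β P := by
        simpa only [hmass, one_mul] using fMat_add_single_le_mul_fMatT (β := β) (k := k) hP

theorem fMatT_eq_one_iff (hβ : memBminus β) (h0 : β ≠ 0) (hP : TupOK P)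
    (hmass : ∀ k, ∑ i, P k i = 1) :
    fMatT β P = 1 ↔ ∀ k l, β k ≠ 0 → β l ≠ 0 → P k = P l := by
  obtain ⟨k, hk, hneg⟩ := hβ.exists_pos h0
  constructor
  · intro h i j hi hj
    have hA : memAminus (β + Pi.single k 1) := memAminus_add_single hβ.1 hk.le hneg
    have hf : fMat (β + Pi.single k 1) P = 1 := by
      refine le_antisymm ?_ (one_le_fMat hA hP hmass)
      simpa only [hmass, h, mul_one] using fMat_add_single_le_mul_fMatT (β := β) (k := k) hP
    have hsupport : ∀ l, β l ≠ 0 → (β + Pi.single k 1 : Fin d → ℝ) l ≠ 0 := fun l hl => by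
      rcases eq_or_ne l k with rfl | hlk
      · rw [Pi.add_apply, Pi.single_eq_same]
        positivity
      · rwa [Pi.add_apply, Pi.single_eq_of_ne hlk, add_zero]
    exact (fMat_eq_one_iff (Or.inr hA) hP hmass).1 hf i j (hsupport i hi) (hsupport j hj)
  · intro h
    refine le_antisymm (fMatT_le zero_le_one fun i hi => ?_) (one_le_fMatT hβ hP hmass)
    rw [prod_rpow_eq_rpow_sum_of_forall_eq (hP.pos hi k) fun l _ hl =>
      congrFun (h l k hl hk.ne') i, hβ.1, Real.rpow_zero]

end PowerSums

section Divergences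

variable {d n : ℕ} {P : Fin d → Fin n → ℝ} {α β : Fin d → ℝ}

lemma one_div_mul_log_eq_zero_iff {c x : ℝ} (hc : c ≠ 0) (hx : 0 < x) :
    1 / c * Real.log x = 0 ↔ x = 1 := by
  rw [mul_eq_zero, or_iff_right (one_div_ne_zero hc)]
  exact ⟨Real.eq_one_of_pos_of_log_eq_zero hx, fun h => h ▸ Real.log_one⟩

theorem Dmat_nonneg (hα : memAplus α ∨ memAminus α) (hb : notBasis α) (hP : TupOK P)
    (hmass : ∀ k, ∑ i, P k i = 1) : 0 ≤ Dmat α P := by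
  rcases hα with hα | hα
  · have hfac : 1 / ((⨆ k, α k) - 1) ≤ 0 :=
      one_div_nonpos.2 (sub_nonpos.2 (hα.iSup_lt_one hb).le)
    have hf : 0 ≤ fMat α P := Finset.sum_nonneg fun i _ =>
      Finset.prod_nonneg fun k _ => Real.rpow_nonneg (hP.1 k i) _
    exact mul_nonneg_of_nonpos_of_nonpos hfac (Real.log_nonpos hf (fMat_le_one hα hP.1 hmass))
  · have hfac : 0 ≤ 1 / ((⨆ k, α k) - 1) :=
      one_div_nonneg.2 (sub_nonneg.2 (hα.one_lt_iSup hb).le)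
    exact mul_nonneg hfac (Real.log_nonneg (one_le_fMat hα hP hmass))

theorem Dmat_eq_zero_iff (hα : memAplus α ∨ memAminus α) (hb : notBasis α) (hP : TupOK P)
    (hmass : ∀ k, ∑ i, P k i = 1) :
    Dmat α P = 0 ↔ ∀ k l, α k ≠ 0 → α l ≠ 0 → P k = P l := by
  have hsup : (⨆ k, α k) ≠ 1 :=
    hα.elim (fun h => (h.iSup_lt_one hb).ne) fun h => (h.one_lt_iSup hb).ne'
  obtain ⟨k, -, -⟩ :=
    Finset.exists_ne_zero_of_sum_ne_zero ((hα.elim And.left And.left).trans_ne one_ne_zero)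
  have hne : (suppIdx P).Nonempty := suppIdx_nonempty ((hmass k).trans_ne one_ne_zero)
  rw [← fMat_eq_one_iff hα hP hmass]
  exact one_div_mul_log_eq_zero_iff (sub_ne_zero.2 hsup) (hP.fMat_pos hne)

theorem DmatT_nonneg (hβ : memBminus β) (hP : TupOK P) (hmass : ∀ k, ∑ i, P k i = 1) :
    0 ≤ DmatT β P := by
  obtain ⟨k, hk, -⟩ := hβ.2
  have hsup : 0 ≤ ⨆ k, β k := hk.trans (le_ciSup (Finite.bddAbove_range β) k)
  exact mul_nonneg (one_div_nonneg.2 hsup) (Real.log_nonneg (one_le_fMatT hβ hP hmass))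

theorem DmatT_eq_zero_iff (hβ : memBminus β) (h0 : β ≠ 0) (hP : TupOK P)
    (hmass : ∀ k, ∑ i, P k i = 1) :
    DmatT β P = 0 ↔ ∀ k l, β k ≠ 0 → β l ≠ 0 → P k = P l := by
  obtain ⟨k, hk, -⟩ := hβ.exists_pos h0
  have hsup : 0 < ⨆ k, β k := hk.trans_le (le_ciSup (Finite.bddAbove_range β) k)
  rw [← fMatT_eq_one_iff hβ h0 hP hmass]
  exact one_div_mul_log_eq_zero_iff hsup.ne'
    (zero_lt_one.trans_le (one_le_fMatT hβ hP hmass))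

end Divergences

/-- **Nonnegativity and faithfulness of the matrix divergences.**  For a tuple
`P` of probability vectors with common support, `D_α(P) ≥ 0` with equality iff
all columns `p⁽ᵏ⁾` with `α_k ≠ 0` coincide, and `D^𝕋_β(P) ≥ 0` with equality
iff all columns `p⁽ᵏ⁾` with `β_k ≠ 0` coincide. -/
theorem matrix_divergence_nonneg_faithful
    {d n : ℕ} (hd : 1 ≤ d) (P : Fin d → Fin n → ℝ)
    (hP : ∀ k, IsProbVec (P k))
    (hsupp : ∀ k l i, P k i ≠ 0 ↔ P l i ≠ 0) :
    (∀ α : Fin d → ℝ, (memAplus α ∨ memAminus α) → notBasis α →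
      0 ≤ Dmat α P ∧
        (Dmat α P = 0 ↔ ∀ k l, α k ≠ 0 → α l ≠ 0 → P k = P l)) ∧
    (∀ β : Fin d → ℝ, memBminus β → β ≠ 0 →
      0 ≤ DmatT β P ∧
        (DmatT β P = 0 ↔ ∀ k l, β k ≠ 0 → β l ≠ 0 → P k = P l)) := by
  have hTup : TupOK P := ⟨fun k => (hP k).1, hsupp⟩
  have hmass : ∀ k, ∑ i, P k i = 1 := fun k => (hP k).2
  exact ⟨fun α hα hb => ⟨Dmat_nonneg hα hb hTup hmass, Dmat_eq_zero_iff hα hb hTup hmass⟩,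
    fun β hβ h0 => ⟨DmatT_nonneg hβ hTup hmass, DmatT_eq_zero_iff hβ h0 hTup hmass⟩⟩
end
end
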